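/- Let n ≥ 2, let s be a real number with n−1 < s, and let A ⊆ ℝⁿ be a Borel set with dimH A > s. Then there is a Borel set B ⊆ ℝⁿ with dimH B ≤ n−1 such that for every x ∈ ℝⁿ \ B, the set of unit vectors e ∈ S^{n−1} for which dimH( A ∩ { x + r·e : r ∈ ℝ } ) ≥ s − (n−1) has positive (n−1)-dimensional Hausdorff measure in S^{n−1}. -/

import Mathlib

open MeasureTheory Metric Set
open scoped ENNReal RealInnerProductSpace

/-
Let `n` be the dimension, and suppose that the set of points `x` through which almost no line meets
`A` in dimension at least `a = s - (n - 1)` had dimension greater than `n - 1`. By Frostman's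
theorem it carries a probability measure `ν` of finite `(n - 1)`-energy, and `A` carries a
probability measure `μ` with compact support and finite `s`-energy. Let `λ` be the measure on the
space of lines obtained by drawing lines in all directions through `ν`-random points. For tubes
`T` of radius `r` around lines,

* the `L²`-norm of `ν(T) / r ^ (n - 1)` over all lines is bounded by the `(n - 1)`-energy of `ν`,
  so `λ` has a density in `L²`;
* the integral over all lines of the `a`-energy of `μ|_T`, divided by `r ^ (2 * (n - 1))`, is
  bounded by the `s`-energy of `μ`, since `a + (n - 1) = s`;
* `μ(T)² ≤ ρ(T) * I_a(μ|_T)`, where `ρ(T)` is at most the `a`-capacity of the part of the support of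
  `μ` in `T`, and tends to `0` with `r` whenever the line meets that support in a set of
  `a`-dimensional measure zero.

As the latter happens for `λ`-almost every line, the Cauchy-Schwarz inequality gives
`∫ μ(T) / r ^ (n - 1) dλ → 0`. But this integral is bounded away from `0`, because the lines
through `x` whose `r`-tube contains a given point `u ≠ x` have measure comparable to `r ^ (n - 1)`.
-/

open Filter Topology
open scoped NNReal

section SquareIntegrable

lemma sq_rpow_inv_two (x : ℝ≥0∞) : (x ^ (2 : ℝ)⁻¹) ^ 2 = x := by
  exact_mod_cast ENNReal.rpow_inv_natCast_pow two_ne_zero x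

variable {α : Type*} [MeasurableSpace α] {κ ν : Measure α}

lemma sq_lintegral_mul_le {f g : α → ℝ≥0∞} (hf : AEMeasurable f κ) (hg : AEMeasurable g κ) :
    (∫⁻ a, f a * g a ∂κ) ^ 2 ≤ (∫⁻ a, f a ^ 2 ∂κ) * ∫⁻ a, g a ^ 2 ∂κ := by
  have holder := ENNReal.lintegral_mul_le_Lp_mul_Lq κ Real.HolderConjugate.two_two hf hg
  simp only [ENNReal.rpow_ofNat, Pi.mul_apply] at holder
  calc (∫⁻ a, f a * g a ∂κ) ^ 2
      ≤ ((∫⁻ a, f a ^ 2 ∂κ) ^ (1 / 2 : ℝ) * (∫⁻ a, g a ^ 2 ∂κ) ^ (1 / 2 : ℝ)) ^ 2 :=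
        pow_le_pow_left' holder 2
    _ = (∫⁻ a, f a ^ 2 ∂κ) * ∫⁻ a, g a ^ 2 ∂κ := by
        rw [mul_pow, ← ENNReal.rpow_mul_natCast, ← ENNReal.rpow_mul_natCast]
        norm_num

lemma absolutelyContinuous_of_sq_lintegral_le {C : ℝ≥0∞}
    (hν : ∀ φ : α → ℝ≥0∞, Measurable φ → (∫⁻ a, φ a ∂ν) ^ 2 ≤ C * ∫⁻ a, φ a ^ 2 ∂κ) : ν ≪ κ := by
  refine Measure.AbsolutelyContinuous.mk fun s hs hκs => ?_
  have bound := hν (s.indicator 1) (measurable_one.indicator hs)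
  have sq_indicator : ∀ a, s.indicator (1 : α → ℝ≥0∞) a ^ 2 = s.indicator 1 a := fun a => by
    by_cases ha : a ∈ s <;> simp [ha]
  simpa only [sq_indicator, lintegral_indicator_one hs, hκs, mul_zero, nonpos_iff_eq_zero,
    pow_eq_zero_iff two_ne_zero] using bound

lemma lintegral_sq_eq_iSup_min {d : α → ℝ≥0∞} (hd : Measurable d) :
    ∫⁻ a, d a ^ 2 ∂κ = ⨆ N : ℕ, ∫⁻ a, min (d a) N ^ 2 ∂κ := by
  rw [← lintegral_iSup (fun N => (hd.min measurable_const).pow_const 2)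
    (fun M N hMN a => by dsimp only; gcongr)]
  refine lintegral_congr fun a => (iSup_eq_of_tendsto (fun M N hMN => by gcongr) ?_).symm
  have min_tendsto : Tendsto (fun N : ℕ => min (d a) N) atTop (𝓝 (min (d a) ∞)) :=
    tendsto_const_nhds.min ENNReal.tendsto_nat_nhds_top
  rw [min_top_right] at min_tendsto
  exact ((ENNReal.continuous_pow 2).tendsto _).comp min_tendsto

-- Testing against the truncations `min d N` keeps the integral that is cancelled finite.
lemma lintegral_sq_le_of_sq_lintegral_mul_le {d : α → ℝ≥0∞} (hd : Measurable d)
    (hdi : ∫⁻ a, d a ∂κ ≠ ∞) {C : ℝ≥0∞}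
    (hC : ∀ φ : α → ℝ≥0∞, Measurable φ → (∫⁻ a, d a * φ a ∂κ) ^ 2 ≤ C * ∫⁻ a, φ a ^ 2 ∂κ) :
    ∫⁻ a, d a ^ 2 ∂κ ≤ C := by
  rw [lintegral_sq_eq_iSup_min hd]
  refine iSup_le fun N => ?_
  have sq_le_mul : ∫⁻ a, min (d a) N ^ 2 ∂κ ≤ ∫⁻ a, d a * min (d a) N ∂κ :=
    lintegral_mono fun a => by
      rw [sq]
      exact mul_le_mul_left (min_le_left _ _) _
  have ne_top : ∫⁻ a, min (d a) N ^ 2 ∂κ ≠ ∞ := by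
    refine (sq_le_mul.trans_lt ?_).ne
    calc ∫⁻ a, d a * min (d a) N ∂κ ≤ ∫⁻ a, d a * N ∂κ :=
          lintegral_mono fun a => mul_le_mul_right (min_le_right _ _) _
      _ = (∫⁻ a, d a ∂κ) * N := lintegral_mul_const _ hd
      _ < ∞ := ENNReal.mul_lt_top hdi.lt_top (ENNReal.natCast_lt_top N)
  rcases eq_or_ne (∫⁻ a, min (d a) N ^ 2 ∂κ) 0 with h0 | h0
  · exact h0.le.trans zero_le
  · have sq_le := (pow_le_pow_left' sq_le_mul 2).trans (hC _ (hd.min measurable_const))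
    rw [sq] at sq_le
    exact (ENNReal.mul_le_mul_iff_left h0 ne_top).1 sq_le

lemma exists_withDensity_of_sq_lintegral_le [SigmaFinite κ] [IsFiniteMeasure ν] {C : ℝ≥0∞}
    (hν : ∀ φ : α → ℝ≥0∞, Measurable φ → (∫⁻ a, φ a ∂ν) ^ 2 ≤ C * ∫⁻ a, φ a ^ 2 ∂κ) :
    ∃ d : α → ℝ≥0∞, Measurable d ∧ ν = κ.withDensity d ∧ ∫⁻ a, d a ^ 2 ∂κ ≤ C := by
  have hd := Measure.measurable_rnDeriv ν κ
  have density : κ.withDensity (ν.rnDeriv κ) = ν :=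
    Measure.withDensity_rnDeriv_eq ν κ (absolutelyContinuous_of_sq_lintegral_le hν)
  refine ⟨ν.rnDeriv κ, hd, density.symm, lintegral_sq_le_of_sq_lintegral_mul_le hd
    (Measure.lintegral_rnDeriv_lt_top ν κ).ne fun φ hφ => ?_⟩
  have bound := hν φ hφ
  rwa [← density, lintegral_withDensity_eq_lintegral_mul _ hd hφ] at bound

lemma sq_lintegral_le_of_lowerSemicontinuous [TopologicalSpace α] [BorelSpace α]
    [κ.WeaklyRegular] {C : ℝ≥0∞} (hC : C ≠ ∞)
    (hν : ∀ ψ : α → ℝ≥0∞, LowerSemicontinuous ψ → (∫⁻ a, ψ a ∂ν) ^ 2 ≤ C * ∫⁻ a, ψ a ^ 2 ∂κ)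
    {φ : α → ℝ≥0∞} (hφ : Measurable φ) : (∫⁻ a, φ a ∂ν) ^ 2 ≤ C * ∫⁻ a, φ a ^ 2 ∂κ := by
  have approx : ∀ k : ℕ, (∫⁻ a, φ a ∂ν) ^ 2 ≤ C * (∫⁻ a, φ a ^ 2 ∂κ + ((k + 1 : ℕ) : ℝ≥0∞)⁻¹) := by
    intro k
    obtain ⟨g, hφg, hg, hgi⟩ := exists_le_lowerSemicontinuous_lintegral_ge κ
      (fun a => φ a ^ 2) (hφ.pow_const 2) (ε := ((k + 1 : ℕ) : ℝ≥0∞)⁻¹)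
      (ENNReal.inv_ne_zero.2 (ENNReal.natCast_ne_top _))
    have sqrt_lsc : LowerSemicontinuous fun a => g a ^ (2 : ℝ)⁻¹ :=
      ENNReal.continuous_rpow_const.comp_lowerSemicontinuous hg
        (ENNReal.monotone_rpow_of_nonneg (by norm_num))
    calc (∫⁻ a, φ a ∂ν) ^ 2 ≤ (∫⁻ a, g a ^ (2 : ℝ)⁻¹ ∂ν) ^ 2 := by
          gcongr with a
          rw [ENNReal.le_rpow_inv_iff two_pos, ENNReal.rpow_two]
          exact hφg a
      _ ≤ C * ∫⁻ a, g a ∂κ := by simpa only [sq_rpow_inv_two] using hν _ sqrt_lsc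
      _ ≤ C * (∫⁻ a, φ a ^ 2 ∂κ + ((k + 1 : ℕ) : ℝ≥0∞)⁻¹) := by gcongr
  have limit := ENNReal.Tendsto.const_mul (a := C) ((tendsto_const_nhds
    (x := ∫⁻ a, φ a ^ 2 ∂κ)).add ((tendsto_add_atTop_iff_nat 1).2
      ENNReal.tendsto_inv_nat_nhds_zero)) (Or.inr hC)
  rw [add_zero] at limit
  exact ge_of_tendsto' limit approx

/- A weak limit of densities bounded in `L²` has a density in `L²`; the weak convergence enters
through lower semicontinuous test functions only. -/
lemma exists_withDensity_of_le_liminf [TopologicalSpace α] [BorelSpace α]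
    [SigmaFinite κ] [κ.WeaklyRegular] [IsFiniteMeasure ν] {g : ℕ → α → ℝ≥0∞}
    (hg : ∀ k, Measurable (g k)) {C : ℝ≥0∞} (hC : C ≠ ∞) (hgC : ∀ k, ∫⁻ a, g k a ^ 2 ∂κ ≤ C)
    (hν : ∀ ψ : α → ℝ≥0∞, LowerSemicontinuous ψ →
      ∫⁻ a, ψ a ∂ν ≤ liminf (fun k => ∫⁻ a, g k a * ψ a ∂κ) atTop) :
    ∃ d : α → ℝ≥0∞, Measurable d ∧ ν = κ.withDensity d ∧ ∫⁻ a, d a ^ 2 ∂κ ≤ C := by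
  refine exists_withDensity_of_sq_lintegral_le fun φ hφ =>
    sq_lintegral_le_of_lowerSemicontinuous hC (fun ψ hψ => ?_) hφ
  rw [← ENNReal.rpow_two, ← ENNReal.le_rpow_inv_iff two_pos]
  refine (hν ψ hψ).trans (liminf_le_of_frequently_le' (Frequently.of_forall fun k => ?_))
  rw [ENNReal.le_rpow_inv_iff two_pos, ENNReal.rpow_two]
  exact (sq_lintegral_mul_le (hg k).aemeasurable hψ.measurable.aemeasurable).trans
    (mul_le_mul_left (hgC k) _)

end SquareIntegrable

section Vanishing

variable {α : Type*} [MeasurableSpace α] {κ : Measure α}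

lemma sq_lintegral_mul_le_of_sq_le_mul {f e ρ d : α → ℝ≥0∞} (he : AEMeasurable e κ)
    (hρ : AEMeasurable ρ κ) (hd : AEMeasurable d κ) (hf : ∀ᵐ a ∂κ, f a ^ 2 ≤ ρ a * e a) :
    (∫⁻ a, f a * d a ∂κ) ^ 2 ≤ (∫⁻ a, e a ∂κ) * ∫⁻ a, ρ a * d a ^ 2 ∂κ := by
  have le_sqrt : ∀ᵐ a ∂κ, f a * d a ≤ e a ^ (2 : ℝ)⁻¹ * (ρ a ^ (2 : ℝ)⁻¹ * d a) := by
    filter_upwards [hf] with a ha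
    have : f a ≤ e a ^ (2 : ℝ)⁻¹ * ρ a ^ (2 : ℝ)⁻¹ := by
      rwa [← ENNReal.mul_rpow_of_nonneg _ _ (by norm_num), mul_comm,
        ENNReal.le_rpow_inv_iff two_pos, ENNReal.rpow_two]
    rw [← mul_assoc]
    gcongr
  calc (∫⁻ a, f a * d a ∂κ) ^ 2
      ≤ (∫⁻ a, e a ^ (2 : ℝ)⁻¹ * (ρ a ^ (2 : ℝ)⁻¹ * d a) ∂κ) ^ 2 :=
        pow_le_pow_left' (lintegral_mono_ae le_sqrt) 2
    _ ≤ (∫⁻ a, (e a ^ (2 : ℝ)⁻¹) ^ 2 ∂κ) * ∫⁻ a, (ρ a ^ (2 : ℝ)⁻¹ * d a) ^ 2 ∂κ :=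
        sq_lintegral_mul_le (he.pow_const _) ((hρ.pow_const _).mul hd)
    _ = (∫⁻ a, e a ∂κ) * ∫⁻ a, ρ a * d a ^ 2 ∂κ := by simp only [mul_pow, sq_rpow_inv_two]

lemma tendsto_lintegral_mul_zero_of_sq_le_mul {f e ρ : ℕ → α → ℝ≥0∞} {d : α → ℝ≥0∞}
    {C M : ℝ≥0∞} (hC : C ≠ ∞) (hM : M ≠ ∞) (he : ∀ k, Measurable (e k))
    (hρ : ∀ k, Measurable (ρ k)) (hd : Measurable d) (hdi : ∫⁻ a, d a ^ 2 ∂κ ≠ ∞)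
    (heC : ∀ k, ∫⁻ a, e k a ∂κ ≤ C) (hρM : ∀ k a, ρ k a ≤ M)
    (hf : ∀ k, ∀ᵐ a ∂κ, f k a ^ 2 ≤ ρ k a * e k a)
    (hρ0 : ∀ᵐ a ∂κ, d a ≠ 0 → Tendsto (fun k => ρ k a) atTop (𝓝 0)) :
    Tendsto (fun k => ∫⁻ a, f k a * d a ∂κ) atTop (𝓝 0) := by
  have d_lt_top : ∀ᵐ a ∂κ, d a ^ 2 < ∞ := ae_lt_top (hd.pow_const 2) hdi
  have weight_tendsto : Tendsto (fun k => ∫⁻ a, ρ k a * d a ^ 2 ∂κ) atTop (𝓝 (∫⁻ _, 0 ∂κ)) := by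
    refine tendsto_lintegral_of_dominated_convergence (fun a => M * d a ^ 2)
      (fun k => (hρ k).mul (hd.pow_const 2))
      (fun k => .of_forall fun a => mul_le_mul_left (hρM k a) _) ?_ ?_
    · rw [lintegral_const_mul _ (hd.pow_const 2)]
      exact ENNReal.mul_ne_top hM hdi
    · filter_upwards [hρ0, d_lt_top] with a ha hda
      rcases eq_or_ne (d a) 0 with h0 | h0
      · simp [h0]
      · simpa only [zero_mul] using ENNReal.Tendsto.mul_const (ha h0) (Or.inr hda.ne)
  have sq_tendsto : Tendsto (fun k => (∫⁻ a, f k a * d a ∂κ) ^ 2) atTop (𝓝 0) := by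
    rw [lintegral_zero] at weight_tendsto
    refine tendsto_of_tendsto_of_tendsto_of_le_of_le tendsto_const_nhds
      (by simpa only [mul_zero] using ENNReal.Tendsto.const_mul weight_tendsto (Or.inr hC))
      (fun _ => zero_le) fun k => ?_
    exact (sq_lintegral_mul_le_of_sq_le_mul (he k).aemeasurable (hρ k).aemeasurable
      hd.aemeasurable (hf k)).trans (mul_le_mul_left (heC k) _)
  have sqrt_tendsto := (ENNReal.continuous_rpow_const (y := (2 : ℝ)⁻¹)).tendsto 0 |>.comp sq_tendsto
  simp only [Function.comp_def, ← ENNReal.rpow_natCast_mul] at sqrt_tendsto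
  simpa using sqrt_tendsto

end Vanishing

section RieszEnergy

/-- The Riesz `t`-energy `∬ d(x, y)⁻ᵗ dμ(x) dμ(y)` of a measure. For `t > 0` the diagonal is given
the value `∞`, so that a measure with an atom has infinite energy. -/
noncomputable def rieszEnergy {X : Type*} [PseudoEMetricSpace X] [MeasurableSpace X] (t : ℝ)
    (μ : Measure X) : ℝ≥0∞ :=
  ∫⁻ q, edist q.1 q.2 ^ (-t) ∂μ.prod μ

lemma inv_le_mul_inv_of_le_mul {K a b : ℝ≥0∞} (hK0 : K ≠ 0) (hK : K ≠ ∞) (h : a ≤ K * b) :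
    b⁻¹ ≤ K * a⁻¹ := by
  calc b⁻¹ = K * (K * b)⁻¹ := by
        rw [ENNReal.mul_inv (.inl hK0) (.inl hK), ← mul_assoc, ENNReal.mul_inv_cancel hK0 hK,
          one_mul]
    _ ≤ K * a⁻¹ := mul_le_mul_right (ENNReal.inv_le_inv.2 h) _

lemma edist_rpow_neg_le_of_antilipschitzWith {X Y : Type*} [PseudoEMetricSpace X]
    [PseudoEMetricSpace Y] {f : X → Y} {K : ℝ≥0} (hf : AntilipschitzWith K f) (hK : K ≠ 0) {t : ℝ}
    (ht : 0 ≤ t) (x y : X) :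
    edist (f x) (f y) ^ (-t) ≤ (K : ℝ≥0∞) ^ t * edist x y ^ (-t) := by
  have inv_le : (edist (f x) (f y))⁻¹ ≤ K * (edist x y)⁻¹ :=
    inv_le_mul_inv_of_le_mul (ENNReal.coe_ne_zero.2 hK) ENNReal.coe_ne_top (hf x y)
  rw [ENNReal.rpow_neg, ENNReal.rpow_neg, ← ENNReal.inv_rpow, ← ENNReal.inv_rpow,
    ← ENNReal.mul_rpow_of_nonneg _ _ ht]
  exact ENNReal.rpow_le_rpow inv_le ht

lemma rieszEnergy_map_le {X Y : Type*} [PseudoEMetricSpace X] [MeasurableSpace X]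
    [PseudoEMetricSpace Y] [SecondCountableTopology Y] [MeasurableSpace Y] [OpensMeasurableSpace Y]
    {μ : Measure X} [SFinite μ] {f : X → Y} (hfm : Measurable f) {K : ℝ≥0}
    (hf : AntilipschitzWith K f) (hK : K ≠ 0) {t : ℝ} (ht : 0 ≤ t) :
    rieszEnergy t (μ.map f) ≤ (K : ℝ≥0∞) ^ t * rieszEnergy t μ := by
  rw [rieszEnergy, rieszEnergy, Measure.map_prod_map _ _ hfm hfm,
    lintegral_map (measurable_edist.pow_const _) (hfm.prodMap hfm),
    ← lintegral_const_mul' _ _ (ENNReal.rpow_ne_top_of_nonneg ht ENNReal.coe_ne_top)]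
  exact lintegral_mono fun q => edist_rpow_neg_le_of_antilipschitzWith hf hK ht q.1 q.2

variable {X : Type*} [PseudoEMetricSpace X] [MeasurableSpace X] {μ : Measure X} [SFinite μ] {a : ℝ}

lemma rieszEnergy_restrict (a : ℝ) (S : Set X) :
    rieszEnergy a (μ.restrict S) = ∫⁻ q in S ×ˢ S, edist q.1 q.2 ^ (-a) ∂μ.prod μ := by
  rw [rieszEnergy, Measure.prod_restrict]

lemma sq_measure_le_mul_rieszEnergy_restrict (ha : 0 ≤ a) {S : Set X} (hS : MeasurableSet S)
    {w : ℝ≥0∞} (hSw : ediam S ^ a ≤ w) (hw0 : w ≠ 0) (hw : w ≠ ∞) :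
    μ S ^ 2 ≤ w * rieszEnergy a (μ.restrict S) := by
  calc μ S ^ 2 = w * ∫⁻ _ in S ×ˢ S, w⁻¹ ∂μ.prod μ := by
        rw [setLIntegral_const, Measure.prod_prod, ← mul_assoc, ENNReal.mul_inv_cancel hw0 hw,
          one_mul, sq]
    _ ≤ w * rieszEnergy a (μ.restrict S) := by
        rw [rieszEnergy_restrict]
        refine mul_le_mul_right (setLIntegral_mono' (hS.prod hS) fun q hq => ?_) _
        rw [ENNReal.rpow_neg, ENNReal.inv_le_inv]
        exact (ENNReal.rpow_le_rpow (edist_le_ediam_of_mem hq.1 hq.2) ha).trans hSw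

lemma tsum_rieszEnergy_restrict_le {ι : Type*} [Countable ι] {S : ι → Set X}
    (hS : ∀ i, MeasurableSet (S i)) (hdisj : Pairwise (Function.onFun Disjoint S)) :
    ∑' i, rieszEnergy a (μ.restrict (S i)) ≤ rieszEnergy a μ := by
  simp only [rieszEnergy_restrict]
  rw [← lintegral_iUnion (fun i => (hS i).prod (hS i))
    (fun i j hij => Disjoint.set_prod_left (hdisj hij) _ _)]
  exact setLIntegral_le_lintegral _ _

lemma sq_measure_univ_le_rieszEnergy_mul_tsum (ha : 0 ≤ a) {U : ℕ → Set X}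
    (hU : ∀ i, MeasurableSet (U i)) (hcover : μ (⋃ i, U i)ᶜ = 0) {w : ℕ → ℝ≥0∞}
    (hUw : ∀ i, ediam (U i) ^ a ≤ w i) (hw0 : ∀ i, w i ≠ 0) (hw : ∀ i, w i ≠ ∞) :
    μ univ ^ 2 ≤ rieszEnergy a μ * ∑' i, w i := by
  have measurable_disjointed : ∀ i, MeasurableSet (disjointed U i) := .disjointed hU
  have measure_le_tsum : μ univ ≤ ∑' i, μ (disjointed U i) := by
    refine le_trans ?_ (measure_iUnion_le _)
    rw [iUnion_disjointed, ← measure_add_measure_compl (.iUnion hU), hcover, add_zero]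
  have sq_le : ∀ i, μ (disjointed U i) ^ 2 ≤ w i * rieszEnergy a (μ.restrict (disjointed U i)) :=
    fun i => sq_measure_le_mul_rieszEnergy_restrict ha (measurable_disjointed i)
      ((ENNReal.rpow_le_rpow (ediam_mono (disjointed_subset U i)) ha).trans (hUw i)) (hw0 i) (hw i)
  have cauchySchwarz := sq_lintegral_mul_le_of_sq_le_mul (κ := .count) (d := 1)
    (measurable_of_countable _).aemeasurable (measurable_of_countable _).aemeasurable
    aemeasurable_one (.of_forall sq_le)
  simp only [lintegral_count, Pi.one_apply, mul_one, one_pow] at cauchySchwarz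
  calc μ univ ^ 2 ≤ (∑' i, μ (disjointed U i)) ^ 2 := pow_le_pow_left' measure_le_tsum 2
    _ ≤ (∑' i, rieszEnergy a (μ.restrict (disjointed U i))) * ∑' i, w i := cauchySchwarz
    _ ≤ rieszEnergy a μ * ∑' i, w i :=
        mul_le_mul_left (tsum_rieszEnergy_restrict_le measurable_disjointed
          (disjoint_disjointed U)) _

end RieszEnergy

section EnergyRatio

/-- The quantity `μ(T)² / I_a(μ|_T)`, the reciprocal of the `a`-energy of the normalised restriction
of `μ` to `T`. It is a lower bound for the Riesz `a`-capacity of `T`. -/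
noncomputable def energyRatio {X : Type*} [PseudoEMetricSpace X] [MeasurableSpace X] (a : ℝ)
    (μ : Measure X) (T : Set X) : ℝ≥0∞ :=
  μ T ^ 2 / rieszEnergy a (μ.restrict T)

lemma energyRatio_le_ediam_rpow_add_one {X : Type*} [PseudoEMetricSpace X] [MeasurableSpace X]
    {μ : Measure X} [SFinite μ] {a : ℝ} (ha : 0 ≤ a) {K : Set X} (hK : MeasurableSet K)
    (hμK : μ Kᶜ = 0) {T : Set X} (hT : MeasurableSet T) : energyRatio a μ T ≤ ediam K ^ a + 1 := by
  rcases eq_or_ne (ediam K ^ a + 1) ∞ with htop | htop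
  · exact htop ▸ le_top
  have measure_eq : μ (T ∩ K) = μ T := measure_inter_conull hμK
  have restrict_eq : μ.restrict (T ∩ K) = μ.restrict T :=
    Measure.restrict_congr_set (inter_ae_eq_left_of_ae_eq_univ (eventuallyEq_univ.2 hμK))
  have sq_le := sq_measure_le_mul_rieszEnergy_restrict (μ := μ) ha (hT.inter hK)
    ((ENNReal.rpow_le_rpow (ediam_mono inter_subset_right) ha).trans le_self_add)
    (by simp) htop
  rw [measure_eq, restrict_eq] at sq_le
  exact ENNReal.div_le_of_le_mul sq_le

lemma exists_isOpen_superset_ediam_rpow_lt {X : Type*} [PseudoEMetricSpace X] {a : ℝ} (ha : 0 < a)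
    {S : Set X} (hS : ediam S ≠ ∞) {δ : ℝ≥0∞} (hδ : δ ≠ 0) :
    ∃ U, IsOpen U ∧ S ⊆ U ∧ ediam U ^ a < ediam S ^ a + δ := by
  have hcont : Continuous fun η : ℝ≥0 => (ediam S + 2 * η) ^ a :=
    ENNReal.continuous_rpow_const.comp (continuous_const.add
      ((ENNReal.continuous_const_mul (by simp)).comp ENNReal.continuous_coe))
  have lt_at_zero : (ediam S + 2 * (0 : ℝ≥0)) ^ a < ediam S ^ a + δ := by
    simpa using ENNReal.lt_add_right (ENNReal.rpow_ne_top_of_nonneg ha.le hS) hδ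
  have eventually_lt := ((hcont.tendsto 0).eventually (gt_mem_nhds lt_at_zero)).filter_mono
    (nhdsWithin_le_nhds (s := Ioi 0))
  obtain ⟨η, hη, hη0⟩ := (eventually_lt.and self_mem_nhdsWithin).exists
  exact ⟨thickening η S, isOpen_thickening, self_subset_thickening (NNReal.coe_pos.2 hη0) S,
    (ENNReal.rpow_le_rpow (ediam_thickening_le η) ha.le).trans_lt hη⟩

lemma exists_isOpen_cover_of_hausdorffMeasure_eq_zero {X : Type*} [EMetricSpace X]
    [MeasurableSpace X] [BorelSpace X] {a : ℝ} (ha : 0 < a) {S : Set X} (hS : μH[a] S = 0)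
    {ε : ℝ≥0∞} (hε : ε ≠ 0) :
    ∃ (U : ℕ → Set X) (w : ℕ → ℝ≥0∞), (∀ i, IsOpen (U i)) ∧ S ⊆ ⋃ i, U i ∧
      (∀ i, ediam (U i) ^ a ≤ w i) ∧ (∀ i, w i ≠ 0) ∧ ∑' i, w i < ε := by
  rw [Measure.hausdorffMeasure_apply] at hS
  simp only [ENNReal.iSup_eq_zero] at hS
  have premeasure_lt := (hS 1 one_pos).trans_lt (ENNReal.half_pos hε)
  simp only [iInf_lt_iff] at premeasure_lt
  obtain ⟨t, hSt, ediam_le_one, htsum⟩ := premeasure_lt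
  obtain ⟨δ, hδ, hδsum⟩ := ENNReal.exists_pos_sum_of_countable (ENNReal.half_pos hε).ne' ℕ
  have hδ0 : ∀ i, (δ i : ℝ≥0∞) ≠ 0 := fun i => ENNReal.coe_ne_zero.2 (hδ i).ne'
  choose U hU htU hUδ using fun i => exists_isOpen_superset_ediam_rpow_lt ha
    ((ediam_le_one i).trans_lt ENNReal.one_lt_top).ne (hδ0 i)
  refine ⟨U, fun i => ediam (t i) ^ a + δ i, hU, hSt.trans (iUnion_mono htU),
    fun i => (hUδ i).le, fun i h0 => hδ0 i (add_eq_zero.1 h0).2, ?_⟩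
  have tsum_le : ∑' i, ediam (t i) ^ a ≤ ∑' i, ⨆ _ : (t i).Nonempty, ediam (t i) ^ a := by
    refine ENNReal.tsum_le_tsum fun i => ?_
    rcases (t i).eq_empty_or_nonempty with hempty | hne
    · simp [hempty, ENNReal.zero_rpow_of_pos ha]
    · exact le_iSup (fun _ : (t i).Nonempty => ediam (t i) ^ a) hne
  rw [ENNReal.tsum_add, ← ENNReal.add_halves ε]
  exact ENNReal.add_lt_add (tsum_le.trans_lt htsum) hδsum

variable {X : Type*} [EMetricSpace X] [MeasurableSpace X] [BorelSpace X] {μ : Measure X}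
  [SFinite μ] {a : ℝ}

lemma energyRatio_le_tsum (ha : 0 ≤ a) {T : Set X} {U : ℕ → Set X}
    (hU : ∀ i, IsOpen (U i)) (hcover : μ (T \ ⋃ i, U i) = 0) {w : ℕ → ℝ≥0∞}
    (hUw : ∀ i, ediam (U i) ^ a ≤ w i) (hw0 : ∀ i, w i ≠ 0) (hw : ∑' i, w i ≠ ∞) :
    energyRatio a μ T ≤ ∑' i, w i := by
  refine ENNReal.div_le_of_le_mul' ?_
  rw [← Measure.restrict_apply_univ T]
  refine sq_measure_univ_le_rieszEnergy_mul_tsum ha (fun i => (hU i).measurableSet) ?_ hUw hw0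
    (ENNReal.ne_top_of_tsum_ne_top hw)
  rwa [Measure.restrict_apply (isOpen_iUnion hU).measurableSet.compl, inter_comm]

lemma measure_eq_zero_of_hausdorffMeasure_eq_zero (ha : 0 < a) (hμ : rieszEnergy a μ ≠ ∞)
    {S : Set X} (hS : μH[a] S = 0) : μ S = 0 := by
  have energyRatio_eq_zero : energyRatio a μ S = 0 := by
    refine le_antisymm (le_of_forall_gt fun ε hε => ?_) zero_le
    obtain ⟨U, w, hU, hcover, hUw, hw0, hwε⟩ :=
      exists_isOpen_cover_of_hausdorffMeasure_eq_zero ha hS hε.ne'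
    exact (energyRatio_le_tsum ha.le hU (by rw [sdiff_eq_empty.2 hcover, measure_empty])
      hUw hw0 hwε.ne_top).trans_lt hwε
  have energy_ne_top : rieszEnergy a (μ.restrict S) ≠ ∞ := by
    rw [rieszEnergy_restrict]
    exact ne_top_of_le_ne_top hμ (setLIntegral_le_lintegral _ _)
  exact pow_eq_zero_iff two_ne_zero |>.1
    ((ENNReal.div_eq_zero_iff.1 energyRatio_eq_zero).resolve_right energy_ne_top)

-- By compactness an open cover of `K ∩ ⋂ k, T k` of small total weight covers `K ∩ T k` for all
-- large `k`.
lemma tendsto_energyRatio_zero {K : Set X} (ha : 0 < a) (hK : IsCompact K) (hμK : μ Kᶜ = 0)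
    {T : ℕ → Set X} (hT : ∀ k, IsClosed (T k)) (hanti : Antitone T)
    (hnull : μH[a] (K ∩ ⋂ k, T k) = 0) :
    Tendsto (fun k => energyRatio a μ (T k)) atTop (𝓝 0) := by
  refine ENNReal.tendsto_nhds_zero.2 fun ε hε => ?_
  obtain ⟨U, w, hU, hcover, hUw, hw0, hwε⟩ :=
    exists_isOpen_cover_of_hausdorffMeasure_eq_zero ha hnull hε.ne'
  obtain ⟨k₀, hk₀⟩ := (hK.diff (isOpen_iUnion hU)).elim_directed_family_closed T hT
    (by rw [sdiff_inter_right_comm, sdiff_eq_empty.2 hcover]) hanti.directed_ge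
  filter_upwards [eventually_ge_atTop k₀] with k hk
  have diff_subset_compl : T k \ ⋃ i, U i ⊆ Kᶜ := fun x hx hxK =>
    (hk₀ ▸ ⟨⟨hxK, hx.2⟩, hanti hk hx.1⟩ : x ∈ (∅ : Set X))
  exact (energyRatio_le_tsum ha.le hU (measure_mono_null diff_subset_compl hμK) hUw hw0
    hwε.ne_top).trans hwε.le

end EnergyRatio

section Capacitability

/-- Choquet capacities: the monotone set functions that are continuous along increasing sequences
and outer regular on compact sets. They are inner regular with respect to compact sets on all
analytic sets. -/
structure IsChoquetCapacity {X : Type*} [TopologicalSpace X] (c : Set X → ℝ≥0∞) : Prop where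
  mono : Monotone c
  iUnion_le : ∀ A : ℕ → Set X, Monotone A → c (⋃ i, A i) ≤ ⨆ i, c (A i)
  exists_isOpen_lt : ∀ K, IsCompact K → ∀ r, c K < r → ∃ V, IsOpen V ∧ K ⊆ V ∧ c V < r

lemma isCompact_setOf_forall_le (N : ℕ → ℕ) : IsCompact {α : ℕ → ℕ | ∀ i, α i ≤ N i} := by
  convert isCompact_univ_pi fun i => (finite_Iic (N i)).isCompact using 1
  ext α
  simp [Pi.le_def]

lemma exists_forall_lt_le_subset_of_isOpen {N : ℕ → ℕ} {W : Set (ℕ → ℕ)} (hW : IsOpen W)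
    (hNW : {α : ℕ → ℕ | ∀ i, α i ≤ N i} ⊆ W) : ∃ k, {α : ℕ → ℕ | ∀ i < k, α i ≤ N i} ⊆ W := by
  have cylinder_subset : ∀ β ∈ {α : ℕ → ℕ | ∀ i, α i ≤ N i}, ∃ k, PiNat.cylinder β k ⊆ W := by
    intro β hβ
    obtain ⟨_, ⟨γ, k, rfl⟩, hmem, hsub⟩ :=
      (PiNat.isTopologicalBasis_cylinders fun _ : ℕ => ℕ).exists_subset_of_mem_open (hNW hβ) hW
    exact ⟨k, (PiNat.mem_cylinder_iff_eq.1 hmem) ▸ hsub⟩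
  choose! k hk using cylinder_subset
  obtain ⟨t, hcover⟩ := (isCompact_setOf_forall_le N).elim_nhds_subcover'
    (fun β _ => PiNat.cylinder β (k β))
    fun β _ => (PiNat.isOpen_cylinder _ β (k β)).mem_nhds (PiNat.self_mem_cylinder β _)
  refine ⟨t.sup fun β => k β, fun α hα => ?_⟩
  have truncation_mem : (fun i => min (α i) (N i)) ∈ {α : ℕ → ℕ | ∀ i, α i ≤ N i} :=
    fun i => min_le_right _ _
  obtain ⟨γ, hγt, hγ⟩ := mem_iUnion₂.1 (hcover truncation_mem)
  refine hk γ γ.2 (PiNat.mem_cylinder_iff.2 fun i hi => ?_)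
  rw [← PiNat.mem_cylinder_iff.1 hγ i hi]
  exact (min_eq_left (hα i (hi.trans_le
    (Finset.le_sup (f := fun β : {α : ℕ → ℕ | ∀ i, α i ≤ N i} => k β) hγt)))).symm

variable {X : Type*} [TopologicalSpace X] {c : Set X → ℝ≥0∞} {r : ℝ≥0∞}

lemma IsChoquetCapacity.exists_lt_image_inter (hc : IsChoquetCapacity c) {g : (ℕ → ℕ) → X}
    {D : Set (ℕ → ℕ)} (hD : r < c (g '' D)) (k : ℕ) :
    ∃ N : ℕ, r < c (g '' (D ∩ {α | α k ≤ N})) := by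
  have exhaust : ⋃ N : ℕ, g '' (D ∩ {α | α k ≤ N}) = g '' D := by
    rw [← image_iUnion, ← inter_iUnion, inter_eq_left.2]
    exact fun α _ => mem_iUnion.2 ⟨α k, le_refl (α k)⟩
  rw [← exhaust] at hD
  exact lt_iSup_iff.1 (hD.trans_le (hc.iUnion_le _ fun M N hMN =>
    image_mono (inter_subset_inter_right _ fun α hα => le_trans hα hMN)))

lemma IsChoquetCapacity.exists_forall_lt_image_setOf_forall_lt_le (hc : IsChoquetCapacity c)
    {g : (ℕ → ℕ) → X} (hr : r < c (range g)) :
    ∃ N : ℕ → ℕ, ∀ k, r < c (g '' {α | ∀ i < k, α i ≤ N i}) := by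
  choose N hN using fun (k : ℕ) (D : {D // r < c (g '' D)}) => hc.exists_lt_image_inter D.2 k
  let D : ℕ → {D // r < c (g '' D)} := fun k =>
    k.rec ⟨univ, by rwa [image_univ]⟩ fun k D => ⟨D.1 ∩ {α | α k ≤ N k D}, hN k D⟩
  have D_eq : ∀ k, (D k).1 = {α | ∀ i < k, α i ≤ N i (D i)} := fun k => by
    induction k with
    | zero => simp [D]
    | succ k ih =>
      change (D k).1 ∩ {α | α k ≤ N k (D k)} = _
      rw [ih]
      ext α
      exact Nat.forall_lt_succ_right.symm
  exact ⟨fun i => N i (D i), fun k => D_eq k ▸ (D k).2⟩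

theorem IsChoquetCapacity.exists_isCompact_lt (hc : IsChoquetCapacity c) {A : Set X}
    (hA : AnalyticSet A) (hr : r < c A) : ∃ K ⊆ A, IsCompact K ∧ r < c K := by
  rw [AnalyticSet] at hA
  rcases hA with rfl | ⟨g, hg, rfl⟩
  · exact ⟨∅, le_rfl, isCompact_empty, hr⟩
  obtain ⟨r', hrr', hr'⟩ := exists_between hr
  obtain ⟨N, hN⟩ := hc.exists_forall_lt_image_setOf_forall_lt_le hr'
  have hK := (isCompact_setOf_forall_le N).image hg
  refine ⟨_, image_subset_range g _, hK, hrr'.trans_le (not_lt.1 fun hlt => ?_)⟩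
  obtain ⟨V, hV, hKV, hVr⟩ := hc.exists_isOpen_lt _ hK _ hlt
  obtain ⟨k, hk⟩ := exists_forall_lt_le_subset_of_isOpen (hV.preimage hg) (image_subset_iff.1 hKV)
  exact ((hN k).trans_le (hc.mono (image_subset_iff.2 hk))).not_gt hVr

end Capacitability

section ClosedConvex

variable {F : Type*} [NormedAddCommGroup F] [InnerProductSpace ℝ F] [CompleteSpace F]

lemma exists_mem_forall_norm_sq_le_inner {C : Set F} (hC : IsClosed C) (hconv : Convex ℝ C)
    (hne : C.Nonempty) : ∃ p ∈ C, ∀ q ∈ C, ‖p‖ ^ 2 ≤ ⟪p, q⟫ := by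
  obtain ⟨p, hp, hmin⟩ := exists_norm_eq_iInf_of_complete_convex hne hC.isComplete hconv 0
  refine ⟨p, hp, fun q hq => ?_⟩
  have inner_nonpos := (norm_eq_iInf_iff_real_inner_le_zero hconv hp).1 hmin q hq
  rw [zero_sub, inner_neg_left, inner_sub_right, real_inner_self_eq_norm_sq] at inner_nonpos
  linarith

lemma exists_mem_forall_norm_sub_sq_le {C : Set F} (hC : IsClosed C) (hconv : Convex ℝ C)
    (hne : C.Nonempty) : ∃ p ∈ C, ∀ q ∈ C, ‖q - p‖ ^ 2 ≤ ‖q‖ ^ 2 - ‖p‖ ^ 2 := by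
  obtain ⟨p, hp, hmin⟩ := exists_mem_forall_norm_sq_le_inner hC hconv hne
  refine ⟨p, hp, fun q hq => ?_⟩
  rw [norm_sub_sq_real, real_inner_comm]
  linarith [hmin q hq]

-- The points of minimal norm of the sets form a Cauchy sequence.
lemma exists_mem_iInter_norm_le_of_antitone {C : ℕ → Set F} (hC : ∀ i, IsClosed (C i))
    (hconv : ∀ i, Convex ℝ (C i)) (hanti : Antitone C) {c : ℝ}
    (hne : ∀ i, ∃ q ∈ C i, ‖q‖ ≤ c) : ∃ p ∈ ⋂ i, C i, ‖p‖ ≤ c := by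
  choose q hq hqc using hne
  choose p hp hmin using fun i =>
    exists_mem_forall_norm_sub_sq_le (hC i) (hconv i) ⟨q i, hq i⟩
  have norm_sq_le : ∀ i, ∀ r ∈ C i, ‖p i‖ ^ 2 ≤ ‖r‖ ^ 2 := fun i r hr => by
    linarith [hmin i r hr, sq_nonneg ‖r - p i‖]
  have norm_le : ∀ i, ‖p i‖ ≤ c := fun i =>
    (pow_le_pow_iff_left₀ (norm_nonneg _) (norm_nonneg _) two_ne_zero).1
      (norm_sq_le i _ (hq i)) |>.trans (hqc i)
  have norm_sq_mono : Monotone fun i => ‖p i‖ ^ 2 := fun i j hij =>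
    norm_sq_le i (p j) (hanti hij (hp j))
  have norm_sq_bdd : BddAbove (range fun i => ‖p i‖ ^ 2) :=
    ⟨c ^ 2, forall_mem_range.2 fun i => pow_le_pow_left₀ (norm_nonneg _) (norm_le i) 2⟩
  have cauchy : CauchySeq p := by
    have norm_sq_cauchy := (tendsto_atTop_ciSup norm_sq_mono norm_sq_bdd).cauchySeq
    rw [Metric.cauchySeq_iff'] at norm_sq_cauchy ⊢
    intro ε hε
    obtain ⟨N, hN⟩ := norm_sq_cauchy (ε ^ 2) (by positivity)
    refine ⟨N, fun n hn => ?_⟩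
    rw [dist_eq_norm]
    refine lt_of_pow_lt_pow_left₀ 2 hε.le ?_
    exact (hmin N (p n) (hanti hn (hp n))).trans_lt ((le_abs_self _).trans_lt (hN n hn))
  obtain ⟨a, ha⟩ := cauchySeq_tendsto_of_complete cauchy
  refine ⟨a, mem_iInter.2 fun i => ?_, le_of_tendsto ha.norm (.of_forall norm_le)⟩
  exact (hC i).mem_of_tendsto ha (eventually_atTop.2 ⟨i, fun j hj => hanti hj (hp j)⟩)

end ClosedConvex

section L2Capacity

variable {X ι : Type*}

/-- The potential `∑ j, w j * f j * 1_{U j}` of the weights `f`; negative weights count as `0`. -/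
noncomputable def potential (U : ι → Set X) (w : ι → ℝ≥0) (f : ι → ℝ) (x : X) : ℝ≥0∞ :=
  ∑' j, (U j).indicator (fun _ => (w j : ℝ≥0∞) * ENNReal.ofReal (f j)) x

/-- The nonnegative square summable weights whose potential is at least `1` on `A`. -/
def admissible (U : ι → Set X) (w : ι → ℝ≥0) (A : Set X) : Set (lp (fun _ : ι => ℝ) 2) :=
  {f | (∀ j, 0 ≤ f j) ∧ ∀ x ∈ A, 1 ≤ potential U w f x}

/-- The `L²`-capacity associated with the kernel `∑ j, w j * 1_{U j}`: the least `ℓ²` norm of an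
admissible family of weights. -/
noncomputable def l2Capacity (U : ι → Set X) (w : ι → ℝ≥0) (A : Set X) : ℝ≥0∞ :=
  ⨅ f ∈ admissible U w A, ‖f‖ₑ

variable {U : ι → Set X} {w : ι → ℝ≥0}

lemma potential_mono {f g : ι → ℝ} (h : ∀ j, f j ≤ g j) (x : X) :
    potential U w f x ≤ potential U w g x := by
  refine ENNReal.tsum_le_tsum fun j => indicator_le_indicator ?_
  gcongr
  exact h j

lemma potential_add {f g : ι → ℝ} (hf : ∀ j, 0 ≤ f j) (hg : ∀ j, 0 ≤ g j) (x : X) :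
    potential U w (f + g) x = potential U w f x + potential U w g x := by
  unfold potential
  rw [← ENNReal.tsum_add]
  refine tsum_congr fun j => ?_
  by_cases hx : x ∈ U j <;> simp [hx, ENNReal.ofReal_add (hf j) (hg j), mul_add]

lemma potential_smul {a : ℝ} (ha : 0 ≤ a) (f : ι → ℝ) (x : X) :
    potential U w (a • f) x = ENNReal.ofReal a * potential U w f x := by
  unfold potential
  rw [← ENNReal.tsum_mul_left]
  refine tsum_congr fun j => ?_
  by_cases hx : x ∈ U j
  · simp only [hx, indicator_of_mem, Pi.smul_apply, smul_eq_mul, ENNReal.ofReal_mul ha]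
    ring
  · simp [hx]

lemma lowerSemicontinuous_potential [TopologicalSpace X] (hU : ∀ j, IsOpen (U j)) (f : ι → ℝ) :
    LowerSemicontinuous (potential U w f) :=
  lowerSemicontinuous_tsum fun j => (hU j).lowerSemicontinuous_indicator zero_le

lemma admissible_anti : Antitone (admissible U w) :=
  fun _ _ hAB _ hf => ⟨hf.1, fun x hx => hf.2 x (hAB hx)⟩

lemma convex_admissible (A : Set X) : Convex ℝ (admissible U w A) := by
  rintro f ⟨hf0, hf⟩ g ⟨hg0, hg⟩ a b ha hb hab
  have smul_f_nonneg : ∀ j, 0 ≤ (a • ⇑f) j := fun j => mul_nonneg ha (hf0 j)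
  have smul_g_nonneg : ∀ j, 0 ≤ (b • ⇑g) j := fun j => mul_nonneg hb (hg0 j)
  refine ⟨fun j => add_nonneg (smul_f_nonneg j) (smul_g_nonneg j), fun x hx => ?_⟩
  calc (1 : ℝ≥0∞) = ENNReal.ofReal a * 1 + ENNReal.ofReal b * 1 := by
        rw [mul_one, mul_one, ← ENNReal.ofReal_add ha hb, hab, ENNReal.ofReal_one]
    _ ≤ ENNReal.ofReal a * potential U w f x + ENNReal.ofReal b * potential U w g x := by
        gcongr
        · exact hf x hx
        · exact hg x hx
    _ = potential U w (a • f + b • g : lp (fun _ : ι => ℝ) 2) x := by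
        rw [← potential_smul ha, ← potential_smul hb, ← potential_add smul_f_nonneg smul_g_nonneg]
        rfl

lemma l2Capacity_lt_iff {A : Set X} {r : ℝ≥0∞} :
    l2Capacity U w A < r ↔ ∃ f ∈ admissible U w A, ‖f‖ₑ < r := by
  simp only [l2Capacity, iInf_lt_iff, exists_prop]

lemma l2Capacity_le {A : Set X} {f : lp (fun _ : ι => ℝ) 2} (hf : f ∈ admissible U w A) :
    l2Capacity U w A ≤ ‖f‖ₑ :=
  iInf₂_le f hf

lemma l2Capacity_mono : Monotone (l2Capacity U w) :=
  fun _ _ hAB => biInf_mono fun _ hf => admissible_anti hAB hf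

/- If `g i` is admissible for `A i` and `g i → f` rapidly, then `|f| + ∑ i, |g i - f|` is admissible
for the union. -/
lemma exists_admissible_iUnion_of_forall_mem_closure {A : ℕ → Set X} {f : lp (fun _ : ι => ℝ) 2}
    (hf : ∀ i, f ∈ closure (admissible U w (A i))) {ε : ℝ} (hε : 0 < ε) :
    ∃ g ∈ admissible U w (⋃ i, A i), ‖g‖ ≤ ‖f‖ + ε := by
  have approx : ∀ i : ℕ, ∃ g ∈ admissible U w (A i), ‖g - f‖ ≤ ε / 2 / 2 ^ i := fun i => by
    obtain ⟨g, hg, hgd⟩ := Metric.mem_closure_iff.1 (hf i) (ε / 2 / 2 ^ i) (by positivity)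
    exact ⟨g, hg, by rw [← dist_eq_norm, dist_comm]; exact hgd.le⟩
  choose g hg hgf using approx
  have norm_toNorm_le : ∀ i, ‖lp.toNorm (g i - f)‖ ≤ ε / 2 / 2 ^ i := fun i => by
    rw [lp.norm_toNorm]
    exact hgf i
  have summable : Summable fun i => lp.toNorm (g i - f) :=
    Summable.of_norm_bounded (summable_geometric_two' ε) norm_toNorm_le
  set majorant : lp (fun _ : ι => ℝ) 2 := lp.toNorm f + ∑' i, lp.toNorm (g i - f)
  have le_majorant : ∀ i j, g i j ≤ majorant j := fun i j => by
    have abs_le_tsum := le_hasSum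
      ((lp.evalCLM ℝ (fun _ : ι => ℝ) 2 j).hasSum summable.hasSum) i fun _ _ => abs_nonneg _
    calc g i j = f j + (g i j - f j) := by ring
      _ ≤ |f j| + |g i j - f j| := add_le_add (le_abs_self _) (le_abs_self _)
      _ ≤ majorant j := add_le_add_right abs_le_tsum _
  refine ⟨majorant, ⟨fun j => ((hg 0).1 j).trans (le_majorant 0 j), fun x hx => ?_⟩, ?_⟩
  · obtain ⟨i, hi⟩ := mem_iUnion.1 hx
    exact ((hg i).2 x hi).trans (potential_mono (le_majorant i) x)
  · refine (norm_add_le _ _).trans ?_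
    rw [lp.norm_toNorm]
    exact add_le_add_right (tsum_of_norm_bounded (hasSum_geometric_two' ε) norm_toNorm_le) _

lemma l2Capacity_iUnion_le {A : ℕ → Set X} (hA : Monotone A) :
    l2Capacity U w (⋃ i, A i) ≤ ⨆ i, l2Capacity U w (A i) := by
  refine le_of_forall_gt_imp_ge_of_dense fun r hr => ?_
  obtain ⟨c, hc, hcr⟩ := ENNReal.lt_iff_exists_nnreal_btwn.1 hr
  obtain ⟨c', hcc', hcr'⟩ := ENNReal.lt_iff_exists_nnreal_btwn.1 hcr
  have exists_norm_le : ∀ i, ∃ f ∈ closure (admissible U w (A i)), ‖f‖ ≤ c := fun i => by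
    obtain ⟨f, hf, hfc⟩ := l2Capacity_lt_iff.1 ((le_iSup _ i).trans_lt hc)
    exact ⟨f, subset_closure hf, by exact_mod_cast hfc.le⟩
  obtain ⟨f, hf, hfc⟩ := exists_mem_iInter_norm_le_of_antitone (fun i => isClosed_closure)
    (fun i => (convex_admissible (A i)).closure)
    (fun i j hij => closure_mono (admissible_anti (hA hij))) exists_norm_le
  have hε : 0 < (c' - c : ℝ) := sub_pos.2 (by exact_mod_cast hcc')
  obtain ⟨g, hg, hgf⟩ := exists_admissible_iUnion_of_forall_mem_closure (mem_iInter.1 hf) hε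
  refine (l2Capacity_le hg).trans (le_trans ?_ hcr'.le)
  have : ‖g‖ ≤ c' := by linarith
  exact_mod_cast this

-- Scaling an admissible `f` by a factor greater than `1` makes its potential exceed `1` near `A`.
lemma exists_isOpen_superset_l2Capacity_lt [TopologicalSpace X] (hU : ∀ j, IsOpen (U j)) {A : Set X}
    {r : ℝ≥0∞} (hr : l2Capacity U w A < r) : ∃ V, IsOpen V ∧ A ⊆ V ∧ l2Capacity U w V < r := by
  obtain ⟨f, hf, hfr⟩ := l2Capacity_lt_iff.1 hr
  have scale : Tendsto (fun a : ℝ => ‖a • f‖ₑ) (𝓝[>] 1) (𝓝 ‖(1 : ℝ) • f‖ₑ) :=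
    Continuous.tendsto (by fun_prop) 1 |>.mono_left nhdsWithin_le_nhds
  rw [one_smul] at scale
  obtain ⟨a, har, ha⟩ := ((scale.eventually (gt_mem_nhds hfr)).and self_mem_nhdsWithin).exists
  have ha0 : 0 ≤ a := zero_le_one.trans (le_of_lt ha)
  refine ⟨{x | 1 < potential U w (a • ⇑f) x},
    (lowerSemicontinuous_potential hU _).isOpen_preimage 1, fun x hx => ?_,
    (l2Capacity_le ⟨fun j => mul_nonneg ha0 (hf.1 j), fun x hx => ?_⟩).trans_lt har⟩
  · calc (1 : ℝ≥0∞) < ENNReal.ofReal a := ENNReal.one_lt_ofReal.2 ha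
      _ = ENNReal.ofReal a * 1 := (mul_one _).symm
      _ ≤ ENNReal.ofReal a * potential U w f x := mul_le_mul_right (hf.2 x hx) _
      _ = potential U w (a • ⇑f) x := (potential_smul ha0 _ x).symm
  · exact le_of_lt hx

theorem isChoquetCapacity_l2Capacity [TopologicalSpace X] (hU : ∀ j, IsOpen (U j)) :
    IsChoquetCapacity (l2Capacity U w) where
  mono := l2Capacity_mono
  iUnion_le _ hA := l2Capacity_iUnion_le hA
  exists_isOpen_lt _ _ _ hr := exists_isOpen_superset_l2Capacity_lt hU hr

end L2Capacity

section L2CapacityDuality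

variable {X Y ι : Type*} [MeasurableSpace Y] {U : ι → Set X} {V : ι → Set Y} {w : ι → ℝ≥0}

/-- The vector in `ℓ²` of the weighted masses `w j * μ (V j)` for `j` in the finite set `J`. -/
noncomputable def massVector (V : ι → Set Y) (w : ι → ℝ≥0) (J : Finset ι) (μ : Measure Y) :
    lp (fun _ : ι => ℝ) 2 :=
  open Classical in ∑ j ∈ J, lp.single 2 j (w j * μ.real (V j))

lemma inner_massVector (f : lp (fun _ : ι => ℝ) 2) (J : Finset ι) (μ : Measure Y) :
    ⟪f, massVector V w J μ⟫ = ∑ j ∈ J, f j * (w j * μ.real (V j)) := by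
  simp only [massVector, inner_sum, lp.inner_single_right, real_inner_eq_re_inner]
  exact Finset.sum_congr rfl fun j _ => mul_comm _ _

lemma massVector_apply_nonneg (J : Finset ι) (μ : Measure Y) (j : ι) :
    0 ≤ massVector V w J μ j := by
  classical
  simp only [massVector, lp.coeFn_sum, Finset.sum_apply, lp.coeFn_single]
  refine Finset.sum_nonneg fun i _ => ?_
  by_cases h : i = j
  · subst h
    simpa using by positivity
  · simp [h]

lemma sum_sq_eq_ofReal_norm_massVector_sq (J : Finset ι) (μ : Measure Y) [IsFiniteMeasure μ] :
    ∑ j ∈ J, ((w j : ℝ≥0∞) * μ (V j)) ^ 2 = ENNReal.ofReal (‖massVector V w J μ‖ ^ 2) := by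
  classical
  have norm_sq := lp.norm_sum_single (p := 2) (E := fun _ : ι => ℝ) (by norm_num)
    (fun j => w j * μ.real (V j)) J
  simp only [ENNReal.toReal_ofNat, Real.rpow_ofNat, Real.norm_eq_abs, sq_abs] at norm_sq
  rw [massVector, norm_sq, ENNReal.ofReal_sum_of_nonneg fun j _ => sq_nonneg _]
  refine Finset.sum_congr rfl fun j _ => ?_
  rw [ENNReal.ofReal_pow (by positivity), ENNReal.ofReal_mul (by positivity),
    ENNReal.ofReal_coe_nnreal, ofReal_measureReal]

lemma convex_range_massVector (J : Finset ι) :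
    Convex ℝ (range fun ν : ProbabilityMeasure Y => massVector V w J ν) := by
  rintro _ ⟨ν, rfl⟩ _ ⟨ν', rfl⟩ a b ha hb hab
  have mixture : IsProbabilityMeasure (ENNReal.ofReal a • (ν : Measure Y) +
      ENNReal.ofReal b • (ν' : Measure Y)) := ⟨by simp [← ENNReal.ofReal_add ha hb, hab]⟩
  refine ⟨⟨_, mixture⟩, ?_⟩
  simp only [massVector, ProbabilityMeasure.coe_mk, Finset.smul_sum, ← Finset.sum_add_distrib,
    ← lp.single_smul, ← lp.single_add]
  refine Finset.sum_congr rfl fun j _ => congrArg _ ?_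
  rw [measureReal_add_apply (ENNReal.mul_ne_top ENNReal.ofReal_ne_top (measure_ne_top _ _))
    (ENNReal.mul_ne_top ENNReal.ofReal_ne_top (measure_ne_top _ _)),
    measureReal_ennreal_smul_apply, measureReal_ennreal_smul_apply,
    ENNReal.toReal_ofReal ha, ENNReal.toReal_ofReal hb, smul_eq_mul, smul_eq_mul]
  ring

lemma mem_admissible_of_one_le_inner_massVector_dirac (hV : ∀ j, MeasurableSet (V j))
    {J : Finset ι} {f : lp (fun _ : ι => ℝ) 2} (hf0 : ∀ j, 0 ≤ f j)
    (hf : ∀ y, 1 ≤ ⟪f, massVector V w J (.dirac y)⟫) : f ∈ admissible V w univ := by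
  refine ⟨hf0, fun y _ => ?_⟩
  calc (1 : ℝ≥0∞) ≤ ENNReal.ofReal ⟪f, massVector V w J (.dirac y)⟫ :=
        ENNReal.one_le_ofReal.2 (hf y)
    _ = ∑ j ∈ J, ENNReal.ofReal (f j * (w j * (Measure.dirac y).real (V j))) := by
        rw [inner_massVector]
        exact ENNReal.ofReal_sum_of_nonneg fun j _ => mul_nonneg (hf0 j) (by positivity)
    _ = ∑ j ∈ J, (V j).indicator (fun _ => (w j : ℝ≥0∞) * ENNReal.ofReal (f j)) y := by
        refine Finset.sum_congr rfl fun j _ => ?_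
        rw [Measure.real, Measure.dirac_apply' y (hV j)]
        by_cases hy : y ∈ V j
        · simp [hy, mul_comm]
        · simp [hy]
    _ ≤ potential V w f y := ENNReal.sum_le_tsum J

-- The mass vector `p` of minimal norm yields the admissible family `p / ‖p‖²`.
lemma exists_probabilityMeasure_norm_massVector_lt [Nonempty Y] (hV : ∀ j, MeasurableSet (V j))
    (J : Finset ι) {c : ℝ} (hc : 0 < c) (hcap : ENNReal.ofReal c < l2Capacity V w univ) :
    ∃ ν : ProbabilityMeasure Y, ‖massVector V w J ν‖ < c⁻¹ := by
  set H := range fun ν : ProbabilityMeasure Y => massVector V w J ν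
  have dirac_mem : ∀ y, massVector V w J (.dirac y) ∈ closure H := fun y =>
    subset_closure ⟨⟨.dirac y, inferInstance⟩, rfl⟩
  obtain ⟨p, hp, hmin⟩ := exists_mem_forall_norm_sq_le_inner isClosed_closure
    (convex_range_massVector J).closure ⟨_, dirac_mem (Classical.arbitrary Y)⟩
  suffices norm_lt : ‖p‖ < c⁻¹ by
    obtain ⟨_, hν, ν, rfl⟩ := mem_closure_iff.1 hp _ (isOpen_lt continuous_norm continuous_const)
      norm_lt
    exact ⟨ν, hν⟩
  by_contra! hge
  have hp0 : 0 < ‖p‖ := (inv_pos.2 hc).trans_le hge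
  have p_nonneg : ∀ j, 0 ≤ p j := fun j => by
    refine closure_minimal ?_ (isClosed_le continuous_const
      (lp.evalCLM ℝ (fun _ : ι => ℝ) 2 j).continuous) hp
    rintro _ ⟨ν, rfl⟩
    exact massVector_apply_nonneg J _ j
  have scaled_mem : (‖p‖ ^ 2)⁻¹ • p ∈ admissible V w univ := by
    refine mem_admissible_of_one_le_inner_massVector_dirac hV (J := J)
      (fun j => mul_nonneg (by positivity) (p_nonneg j)) fun y => ?_
    rw [real_inner_smul_left, ← div_eq_inv_mul, one_le_div (by positivity)]
    exact hmin _ (dirac_mem y)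
  refine hcap.not_ge ((l2Capacity_le scaled_mem).trans ?_)
  rw [← ofReal_norm, norm_smul, Real.norm_of_nonneg (by positivity)]
  refine ENNReal.ofReal_le_ofReal ?_
  calc (‖p‖ ^ 2)⁻¹ * ‖p‖ = ‖p‖⁻¹ := by field_simp
    _ ≤ c := inv_le_of_inv_le₀ hc hge

lemma isClosed_setOf_sum_sq_le [MetricSpace Y] [BorelSpace Y] (hV : ∀ j, IsOpen (V j))
    (J : Finset ι) (r : ℝ≥0∞) :
    IsClosed {ν : ProbabilityMeasure Y |
      ∑ j ∈ J, ((w j : ℝ≥0∞) * (ν : Measure Y) (V j)) ^ 2 ≤ r} := by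
  refine (lowerSemicontinuous_sum fun j _ => ?_).isClosed_preimage r
  have mass_lsc : LowerSemicontinuous fun ν : ProbabilityMeasure Y => (ν : Measure Y) (V j) :=
    fun _ => lowerSemicontinuousAt_iff_le_liminf.2
      (ProbabilityMeasure.le_liminf_measure_open_of_tendsto tendsto_id (hV j))
  refine ((ENNReal.continuous_pow 2).comp (ENNReal.continuous_const_mul
    (ENNReal.coe_ne_top (r := w j)))).comp_lowerSemicontinuous mass_lsc fun a b hab => ?_
  dsimp only [Function.comp_apply]
  gcongr

lemma exists_probabilityMeasure_tsum_sq_le [MetricSpace Y] [BorelSpace Y] [CompactSpace Y]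
    [Nonempty Y] (hV : ∀ j, IsOpen (V j)) {c : ℝ} (hc : 0 < c)
    (hcap : ENNReal.ofReal c < l2Capacity V w univ) :
    ∃ ν : ProbabilityMeasure Y,
      ∑' j, ((w j : ℝ≥0∞) * (ν : Measure Y) (V j)) ^ 2 ≤ ENNReal.ofReal (c⁻¹ ^ 2) := by
  let S : Finset ι → Set (ProbabilityMeasure Y) := fun J =>
    {ν | ∑ j ∈ J, ((w j : ℝ≥0∞) * (ν : Measure Y) (V j)) ^ 2 ≤ ENNReal.ofReal (c⁻¹ ^ 2)}
  have nonempty : ∀ J, (S J).Nonempty := fun J => by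
    obtain ⟨ν, hν⟩ := exists_probabilityMeasure_norm_massVector_lt
      (fun j => (hV j).measurableSet) J hc hcap
    refine ⟨ν, (sum_sq_eq_ofReal_norm_massVector_sq J _).trans_le ?_⟩
    gcongr
  have closed : ∀ J, IsClosed (S J) := fun J => isClosed_setOf_sum_sq_le hV J _
  have directed : Directed (· ⊇ ·) S := directed_of_isDirected_le fun J J' hJ ν hν =>
    (Finset.sum_le_sum_of_subset hJ).trans (mem_ofPred.1 hν)
  obtain ⟨ν, hν⟩ := IsCompact.nonempty_iInter_of_directed_nonempty_isCompact_isClosed S directed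
    nonempty (fun J => (closed J).isCompact) closed
  refine ⟨ν, ?_⟩
  rw [ENNReal.tsum_eq_iSup_sum]
  exact iSup_le fun J => mem_iInter.1 hν J

lemma l2Capacity_preimage_val (K : Set X) :
    l2Capacity (fun j => (Subtype.val ⁻¹' U j : Set K)) w univ = l2Capacity U w K := by
  have admissible_eq : admissible (fun j => (Subtype.val ⁻¹' U j : Set K)) w univ =
      admissible U w K :=
    ext fun f => and_congr_right fun _ => ⟨fun h x hx => h ⟨x, hx⟩ trivial, fun h x _ => h x x.2⟩
  rw [l2Capacity, l2Capacity, admissible_eq]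

lemma l2Capacity_empty : l2Capacity U w ∅ = 0 :=
  nonpos_iff_eq_zero.1 <| (l2Capacity_le (f := 0)
    ⟨fun _ => le_rfl, fun x hx => (notMem_empty x hx).elim⟩).trans_eq enorm_zero

theorem exists_probabilityMeasure_tsum_sq_lt_top [MetricSpace X] [MeasurableSpace X] [BorelSpace X]
    (hU : ∀ j, IsOpen (U j)) {A : Set X} (hA : AnalyticSet A) (hcap : l2Capacity U w A ≠ 0) :
    ∃ K ⊆ A, IsCompact K ∧ ∃ ν : ProbabilityMeasure X, (ν : Measure X) Kᶜ = 0 ∧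
      ∑' j, ((w j : ℝ≥0∞) * (ν : Measure X) (U j)) ^ 2 < ∞ := by
  obtain ⟨c, hc, hcA⟩ := ENNReal.lt_iff_exists_nnreal_btwn.1 (pos_iff_ne_zero.2 hcap)
  obtain ⟨K, hKA, hK, hcK⟩ := (isChoquetCapacity_l2Capacity hU).exists_isCompact_lt hA hcA
  rw [← l2Capacity_preimage_val, ← ENNReal.ofReal_coe_nnreal] at hcK
  have : CompactSpace K := isCompact_iff_compactSpace.1 hK
  have : Nonempty K := by
    refine (nonempty_iff_ne_empty.2 ?_).to_subtype
    rintro rfl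
    simp [l2Capacity_preimage_val, l2Capacity_empty] at hcK
  obtain ⟨ν, hν⟩ := exists_probabilityMeasure_tsum_sq_le
    (fun j => (hU j).preimage continuous_subtype_val) (NNReal.coe_pos.2 (ENNReal.coe_pos.1 hc)) hcK
  refine ⟨K, hKA, hK, ν.map measurable_subtype_coe.aemeasurable, ?_, ?_⟩
  · rw [ProbabilityMeasure.toMeasure_map,
      Measure.map_apply measurable_subtype_coe hK.measurableSet.compl, preimage_compl,
      Subtype.coe_preimage_self, compl_univ, measure_empty]
  · simp only [ProbabilityMeasure.toMeasure_map,
      fun j => Measure.map_apply (μ := (ν : Measure K)) measurable_subtype_coe (hU j).measurableSet]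
    exact hν.trans_lt ENNReal.ofReal_lt_top

end L2CapacityDuality

section DyadicCubes

variable {ι : Type*}

/-- The weight `2 ^ (k * t / 2)` of the cubes of generation `k`: its square is comparable to the
power `-t` of the diameter. -/
noncomputable def gridWeight (t : ℝ) (j : ℕ × (ι → ℤ)) : ℝ≥0 :=
  ((2 : ℝ≥0) ^ (t / 2)) ^ j.1

lemma coe_gridWeight_sq {t : ℝ} (ht : 0 ≤ t) (j : ℕ × (ι → ℤ)) :
    (gridWeight t j : ℝ≥0∞) ^ 2 = ((2 : ℝ≥0∞) ^ t) ^ j.1 := by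
  rw [gridWeight, ENNReal.coe_pow, ENNReal.coe_rpow_of_nonneg _ (by positivity), ← pow_mul,
    mul_comm j.1, pow_mul, ← ENNReal.rpow_mul_natCast, ENNReal.coe_ofNat]
  norm_num

variable [Fintype ι]

/-- The open cube in `ℝ^ι` with centre `2⁻ᵏ z` and side length `4 * 2⁻ᵏ`, for `j = (k, z)`. The
cubes of one generation `k` overlap, so that any two points at distance at most `2⁻ᵏ` share one. -/
def gridCube (j : ℕ × (ι → ℤ)) : Set (ι → ℝ) :=
  ball (fun i => j.2 i / 2 ^ j.1) (2 / 2 ^ j.1)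

lemma mem_gridCube_iff {j : ℕ × (ι → ℤ)} {x : ι → ℝ} :
    x ∈ gridCube j ↔ ∀ i, |2 ^ j.1 * x i - j.2 i| < 2 := by
  rw [gridCube, mem_ball, dist_pi_lt_iff (by positivity)]
  refine forall_congr' fun i => ?_
  have h : 2 ^ j.1 * x i - j.2 i = 2 ^ j.1 * (x i - j.2 i / 2 ^ j.1) := by field_simp
  rw [h, abs_mul, abs_of_pos (by positivity), Real.dist_eq, lt_div_iff₀' (by positivity)]

lemma ediam_gridCube_le (j : ℕ × (ι → ℤ)) : ediam (gridCube j) ≤ 4 * ((2 : ℝ≥0∞) ^ j.1)⁻¹ := by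
  rw [gridCube, ← eball_ofReal]
  refine ediam_eball_le.trans_eq ?_
  rw [ENNReal.ofReal_div_of_pos (by positivity), ENNReal.ofReal_pow (by norm_num),
    ENNReal.ofReal_ofNat, div_eq_mul_inv, ← mul_assoc]
  norm_num

lemma exists_mem_gridCube_of_dist_le {k : ℕ} {x y : ι → ℝ} (h : 2 ^ k * dist x y ≤ 1) :
    ∃ z, x ∈ gridCube (k, z) ∧ y ∈ gridCube (k, z) := by
  have floor_lt : ∀ i, |2 ^ k * x i - ⌊2 ^ k * x i⌋| < 1 := fun i =>
    (abs_of_nonneg (Int.fract_nonneg (2 ^ k * x i))).trans_lt (Int.fract_lt_one _)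
  have diff_le : ∀ i, |2 ^ k * y i - 2 ^ k * x i| ≤ 1 := fun i => by
    rw [← mul_sub, abs_mul, abs_of_pos (by positivity), abs_sub_comm]
    exact (mul_le_mul_of_nonneg_left (dist_le_pi_dist x y i) (by positivity)).trans h
  refine ⟨fun i => ⌊2 ^ k * x i⌋, mem_gridCube_iff.2 fun i => (floor_lt i).trans one_lt_two,
    mem_gridCube_iff.2 fun i => (abs_sub_le _ (2 ^ k * x i) _).trans_lt ?_⟩
  linarith [floor_lt i, diff_le i]

lemma tsum_indicator_gridCube_le (k : ℕ) (x : ι → ℝ) {g : (ι → ℤ) → ℝ≥0∞} {a : ℝ≥0∞}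
    (hg : ∀ z, x ∈ gridCube (k, z) → g z ≤ a) :
    ∑' z, (gridCube (k, z)).indicator (fun _ => g z) x ≤ 5 ^ Fintype.card ι * a := by
  classical
  let s : Finset (ι → ℤ) :=
    Fintype.piFinset fun i => Finset.Icc (⌊2 ^ k * x i⌋ - 2) (⌊2 ^ k * x i⌋ + 2)
  have card_eq : s.card = 5 ^ Fintype.card ι := by
    have card_Icc : ∀ m : ℤ, (Finset.Icc (m - 2) (m + 2)).card = 5 := fun m => by
      rw [Int.card_Icc]
      omega
    simp only [s, Fintype.card_piFinset, card_Icc, Finset.prod_const, Finset.card_univ]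
  have mem_s : ∀ z, x ∈ gridCube (k, z) → z ∈ s := fun z hz => by
    refine Fintype.mem_piFinset.2 fun i => Finset.mem_Icc.2 ?_
    have lt_two := abs_lt.1 (mem_gridCube_iff.1 hz i)
    constructor
    · rw [sub_le_iff_le_add, Int.floor_le_iff]
      push_cast
      linarith
    · rw [← sub_le_iff_le_add, Int.le_floor]
      push_cast
      linarith
  calc ∑' z, (gridCube (k, z)).indicator (fun _ => g z) x
      = ∑ z ∈ s, (gridCube (k, z)).indicator (fun _ => g z) x :=
        tsum_eq_sum fun z hz => indicator_of_notMem (fun hx => hz (mem_s z hx)) _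
    _ ≤ ∑ _z ∈ s, a := Finset.sum_le_sum fun z _ => by
        by_cases hz : x ∈ gridCube (k, z)
        · simpa only [indicator_of_mem hz] using hg z hz
        · simp only [indicator_of_notMem hz, zero_le]
    _ = 5 ^ Fintype.card ι * a := by
        rw [Finset.sum_const, card_eq, nsmul_eq_mul, Nat.cast_pow, Nat.cast_ofNat]

end DyadicCubes

section GridEnergy

variable {ι : Type*} [Fintype ι]

lemma rpow_le_one_add_of_forall_two_pow_le {t : ℝ} (ht : 0 < t) {r S : ℝ≥0∞}
    (h : ∀ k : ℕ, 2 ^ k ≤ r → ((2 : ℝ≥0∞) ^ t) ^ k ≤ S) : r ^ t ≤ 1 + 2 ^ t * S := by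
  have pow_comm : ∀ k : ℕ, ((2 : ℝ≥0∞) ^ t) ^ k = ((2 : ℝ≥0∞) ^ k) ^ t := fun k => by
    rw [← ENNReal.rpow_mul_natCast, ← ENNReal.rpow_natCast_mul, mul_comm]
  rcases eq_or_ne r ∞ with rfl | hr
  · have hS : S = ∞ := by
      refine top_unique (le_of_tendsto' (ENNReal.tendsto_pow_atTop_nhds_top_iff.2 ?_)
        fun k => h k le_top)
      exact ENNReal.one_lt_rpow (by norm_num) ht
    simp [hS, ENNReal.mul_top]
  lift r to ℝ≥0 using hr
  rcases le_total r 1 with hr1 | hr1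
  · exact (ENNReal.rpow_le_one (ENNReal.coe_le_one_iff.2 hr1) ht.le).trans le_self_add
  · obtain ⟨k, hk, hk'⟩ := exists_nat_pow_near hr1 one_lt_two
    calc (r : ℝ≥0∞) ^ t ≤ ((2 : ℝ≥0∞) ^ (k + 1)) ^ t :=
          ENNReal.rpow_le_rpow (mod_cast hk'.le) ht.le
      _ = 2 ^ t * ((2 : ℝ≥0∞) ^ t) ^ k := by rw [← pow_comm, pow_succ']
      _ ≤ 2 ^ t * S := mul_le_mul_right (h k (mod_cast hk)) _
      _ ≤ 1 + 2 ^ t * S := le_add_self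

lemma edist_rpow_neg_le_tsum_gridCube {t : ℝ} (ht : 0 < t) (q : (ι → ℝ) × (ι → ℝ)) :
    edist q.1 q.2 ^ (-t) ≤ 1 + 2 ^ t * ∑' j : ℕ × (ι → ℤ),
      (gridWeight t j : ℝ≥0∞) ^ 2 * (gridCube j ×ˢ gridCube j).indicator 1 q := by
  rw [ENNReal.rpow_neg, ← ENNReal.inv_rpow]
  refine rpow_le_one_add_of_forall_two_pow_le ht fun k hk => ?_
  have two_pow_mul_dist_le : 2 ^ k * dist q.1 q.2 ≤ 1 := by
    rw [ENNReal.le_inv_iff_mul_le, edist_dist, ← ENNReal.ofReal_ofNat 2,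
      ← ENNReal.ofReal_pow (by norm_num), ← ENNReal.ofReal_mul (by positivity)] at hk
    exact ENNReal.ofReal_le_one.1 hk
  obtain ⟨z, hz⟩ := exists_mem_gridCube_of_dist_le two_pow_mul_dist_le
  refine le_trans ?_ (ENNReal.le_tsum (k, z))
  rw [indicator_of_mem (show q ∈ _ ×ˢ _ from hz), coe_gridWeight_sq ht.le, Pi.one_apply, mul_one]

lemma rieszEnergy_le_tsum_gridCube {t : ℝ} (ht : 0 < t) (ν : Measure (ι → ℝ))
    [IsProbabilityMeasure ν] :
    rieszEnergy t ν ≤ 1 + 2 ^ t *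
      ∑' j : ℕ × (ι → ℤ), ((gridWeight t j : ℝ≥0∞) * ν (gridCube j)) ^ 2 := by
  have measurableSet_prod : ∀ j : ℕ × (ι → ℤ), MeasurableSet (gridCube j ×ˢ gridCube j) :=
    fun j => measurableSet_ball.prod measurableSet_ball
  have measurable_term : ∀ j : ℕ × (ι → ℤ), Measurable fun q : (ι → ℝ) × (ι → ℝ) =>
      (gridWeight t j : ℝ≥0∞) ^ 2 * (gridCube j ×ˢ gridCube j).indicator 1 q :=
    fun j => (measurable_one.indicator (measurableSet_prod j)).const_mul _
  refine (lintegral_mono (edist_rpow_neg_le_tsum_gridCube ht)).trans_eq ?_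
  rw [lintegral_add_left measurable_const, lintegral_one, measure_univ,
    lintegral_const_mul _ (.tsum measurable_term),
    lintegral_tsum fun j => (measurable_term j).aemeasurable]
  congr! with j
  rw [lintegral_const_mul _ (measurable_one.indicator (measurableSet_prod j)),
    lintegral_indicator_one (measurableSet_prod j), Measure.prod_prod, mul_pow, sq (ν _)]

end GridEnergy

section Frostman

lemma hausdorffMeasure_eq_zero_of_forall_exists_cover {X ι : Type*} [EMetricSpace X]
    [MeasurableSpace X] [BorelSpace X] [Countable ι] {s : ℝ} (hs : 0 < s) (U : ι → Set X)
    {A : Set X} (h : ∀ ε : ℝ≥0∞, ε ≠ 0 → ∃ J : Set ι, A ⊆ ⋃ j ∈ J, U j ∧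
      ∑' j : J, ediam (U j) ^ s ≤ ε) : μH[s] A = 0 := by
  obtain ⟨ε, -, hε0, hε⟩ := exists_seq_strictAnti_tendsto' (zero_lt_one (α := ℝ≥0∞))
  choose J hAJ hJ using fun N => h (ε N) (hε0 N).1.ne'
  have diam_tendsto : Tendsto (fun N => ε N ^ s⁻¹) atTop (𝓝 0) := by
    simpa only [ENNReal.zero_rpow_of_pos (inv_pos.2 hs)] using hε.ennrpow_const s⁻¹
  have le_liminf := Measure.hausdorffMeasure_le_liminf_tsum s A _ diam_tendsto
    (fun N (j : J N) => U j)
    (.of_forall fun N j => (ENNReal.le_rpow_inv_iff hs).2 ((ENNReal.le_tsum j).trans (hJ N)))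
    (.of_forall fun N => (hAJ N).trans_eq (biUnion_eq_iUnion _ _))
  refine nonpos_iff_eq_zero.1 (le_liminf.trans_eq (Tendsto.liminf_eq ?_))
  exact tendsto_of_tendsto_of_tendsto_of_le_of_le tendsto_const_nhds hε (fun _ => zero_le) hJ

lemma tsum_enorm_sq_eq {ι : Type*} (f : lp (fun _ : ι => ℝ) 2) : ∑' j, ‖f j‖ₑ ^ 2 = ‖f‖ₑ ^ 2 := by
  have hasSum_sq := lp.hasSum_norm (p := 2) (by norm_num) f
  simp only [ENNReal.toReal_ofNat, Real.rpow_ofNat] at hasSum_sq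
  simp only [← ofReal_norm, ← ENNReal.ofReal_pow (norm_nonneg _)]
  rw [← hasSum_sq.tsum_eq,
    ENNReal.ofReal_tsum_of_nonneg (fun j => by positivity) hasSum_sq.summable]

variable {ι : Type*} [Fintype ι]

lemma exists_mul_pow_lt_of_one_le_potential (w : ℕ × (ι → ℤ) → ℝ≥0) {q : ℝ≥0∞} (hq : q < 1) :
    ∃ κ : ℝ≥0∞, κ ≠ 0 ∧ ∀ (f : ℕ × (ι → ℤ) → ℝ) (x : ι → ℝ), 1 ≤ potential gridCube w f x →
      ∃ j, x ∈ gridCube j ∧ κ * q ^ j.1 < w j * ENNReal.ofReal (f j) := by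
  have sub_ne_zero : 1 - q ≠ 0 := (tsub_pos_of_lt hq).ne'
  refine ⟨(2 * 5 ^ Fintype.card ι)⁻¹ * (1 - q), mul_ne_zero (by simp [ENNReal.mul_eq_top])
    sub_ne_zero, fun f x => ?_⟩
  contrapose!
  intro hf
  calc potential gridCube w f x
      = ∑' k, ∑' z, (gridCube (k, z)).indicator
          (fun _ => (w (k, z) : ℝ≥0∞) * ENNReal.ofReal (f (k, z))) x := ENNReal.tsum_prod'
    _ ≤ ∑' k : ℕ, 5 ^ Fintype.card ι * ((2 * 5 ^ Fintype.card ι)⁻¹ * (1 - q) * q ^ k) :=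
        ENNReal.tsum_le_tsum fun k => tsum_indicator_gridCube_le k x fun z => hf (k, z)
    _ = 5 ^ Fintype.card ι * (2 * 5 ^ Fintype.card ι)⁻¹ * ((1 - q) * (1 - q)⁻¹) := by
        rw [ENNReal.tsum_mul_left, ENNReal.tsum_mul_left, ENNReal.tsum_geometric]
        ring
    _ = 2⁻¹ := by
        rw [ENNReal.mul_inv_cancel sub_ne_zero (ENNReal.sub_ne_top ENNReal.one_ne_top), mul_one,
          ENNReal.mul_inv (by simp) (by simp), mul_left_comm,
          ENNReal.mul_inv_cancel (by simp) (by simp), mul_one]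
    _ < 1 := ENNReal.one_half_lt_one

lemma exists_ediam_gridCube_rpow_le_of_one_le_potential {t s : ℝ} (ht : 0 ≤ t) (hts : t < s) :
    ∃ C : ℝ≥0∞, C ≠ ∞ ∧ ∀ (f : ℕ × (ι → ℤ) → ℝ) (x : ι → ℝ),
      1 ≤ potential gridCube (gridWeight t) f x →
        ∃ j, x ∈ gridCube j ∧ ediam (gridCube j) ^ s ≤ C * ENNReal.ofReal (f j) ^ 2 := by
  set q : ℝ≥0∞ := 2 ^ ((t - s) / 2)
  have hs : 0 ≤ s := ht.trans hts.le
  have hq : q < 1 := ENNReal.rpow_lt_one_of_one_lt_of_neg (by norm_num) (by linarith)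
  obtain ⟨κ, hκ, hpotential⟩ := exists_mul_pow_lt_of_one_le_potential (gridWeight (ι := ι) t) hq
  refine ⟨4 ^ s * (κ ^ 2)⁻¹, ENNReal.mul_ne_top (ENNReal.rpow_ne_top_of_nonneg hs (by norm_num))
    (by simpa), fun f x hx => ?_⟩
  obtain ⟨j, hj, hlt⟩ := hpotential f x hx
  refine ⟨j, hj, ?_⟩
  have inv_two_pow_rpow : (((2 : ℝ≥0∞) ^ j.1)⁻¹) ^ s * ((2 : ℝ≥0∞) ^ t) ^ j.1 = (q ^ j.1) ^ 2 := by
    rw [← ENNReal.rpow_natCast 2 j.1, ← ENNReal.rpow_neg, ← ENNReal.rpow_mul,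
      ← ENNReal.rpow_mul_natCast, ← ENNReal.rpow_add _ _ (by simp) (by simp), ← pow_mul,
      ← ENNReal.rpow_mul_natCast]
    congr 1
    push_cast
    ring
  have weight_sq : (gridWeight t j : ℝ≥0∞) ^ 2 = ((2 : ℝ≥0∞) ^ t) ^ j.1 := coe_gridWeight_sq ht j
  have mul_kappa_sq_le : (((2 : ℝ≥0∞) ^ j.1)⁻¹) ^ s * κ ^ 2 ≤ ENNReal.ofReal (f j) ^ 2 := by
    have two_rpow_ne_top : (2 : ℝ≥0∞) ^ t ≠ ∞ := ENNReal.rpow_ne_top_of_nonneg ht (by simp)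
    rw [← ENNReal.mul_le_mul_iff_right (a := ((2 : ℝ≥0∞) ^ t) ^ j.1) (by simp)
      (ENNReal.pow_ne_top two_rpow_ne_top), ← mul_assoc, mul_comm (_ ^ j.1), inv_two_pow_rpow,
      ← weight_sq, ← mul_pow, ← mul_pow, mul_comm _ κ]
    exact pow_le_pow_left' hlt.le 2
  calc ediam (gridCube j) ^ s ≤ (4 * ((2 : ℝ≥0∞) ^ j.1)⁻¹) ^ s :=
        ENNReal.rpow_le_rpow (ediam_gridCube_le j) hs
    _ = 4 ^ s * (((2 : ℝ≥0∞) ^ j.1)⁻¹) ^ s := ENNReal.mul_rpow_of_nonneg _ _ hs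
    _ ≤ 4 ^ s * (ENNReal.ofReal (f j) ^ 2 / κ ^ 2) := mul_le_mul_right
        ((ENNReal.le_div_iff_mul_le (.inl (pow_ne_zero 2 hκ)) (.inr (by simp))).2 mul_kappa_sq_le) _
    _ = 4 ^ s * (κ ^ 2)⁻¹ * ENNReal.ofReal (f j) ^ 2 := by rw [div_eq_mul_inv]; ring

lemma hausdorffMeasure_eq_zero_of_l2Capacity_gridCube_eq_zero {t s : ℝ} (ht : 0 ≤ t) (hts : t < s)
    {A : Set (ι → ℝ)} (hA : l2Capacity gridCube (gridWeight t) A = 0) : μH[s] A = 0 := by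
  obtain ⟨C, hC, hCf⟩ := exists_ediam_gridCube_rpow_le_of_one_le_potential (ι := ι) ht hts
  refine hausdorffMeasure_eq_zero_of_forall_exists_cover (ht.trans_lt hts) gridCube fun ε hε => ?_
  have tendsto_zero : Tendsto (fun r : ℝ≥0∞ => C * r ^ 2) (𝓝[>] 0) (𝓝 0) := by
    have : Continuous fun r : ℝ≥0∞ => C * r ^ 2 :=
      (ENNReal.continuous_const_mul hC).comp (ENNReal.continuous_pow 2)
    simpa using (this.tendsto 0).mono_left nhdsWithin_le_nhds
  obtain ⟨r, hrε, hr⟩ := ((tendsto_zero.eventually_le_const (pos_iff_ne_zero.2 hε)).and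
    self_mem_nhdsWithin).exists
  obtain ⟨f, hf, hfr⟩ := l2Capacity_lt_iff.1 (hA.trans_lt hr)
  refine ⟨{j | ediam (gridCube j) ^ s ≤ C * ENNReal.ofReal (f j) ^ 2}, fun x hx => ?_, ?_⟩
  · obtain ⟨j, hj, hle⟩ := hCf f x (hf.2 x hx)
    exact mem_biUnion (mem_ofPred.2 hle) hj
  calc _ ≤ ∑' j : {j | ediam (gridCube j) ^ s ≤ C * ENNReal.ofReal (f j) ^ 2},
        C * ‖f j‖ₑ ^ 2 := ENNReal.tsum_le_tsum fun j => j.2.trans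
          (mul_le_mul_right (pow_le_pow_left' (Real.ofReal_le_enorm _) 2) _)
    _ ≤ ∑' j, C * ‖f j‖ₑ ^ 2 := ENNReal.tsum_comp_le_tsum_of_injective Subtype.val_injective _
    _ = C * ‖f‖ₑ ^ 2 := by rw [ENNReal.tsum_mul_left, tsum_enorm_sq_eq]
    _ ≤ C * r ^ 2 := mul_le_mul_right (pow_le_pow_left' hfr.le 2) _
    _ ≤ ε := hrε

theorem exists_probabilityMeasure_rieszEnergy_lt_top_pi {A : Set (ι → ℝ)} (hA : AnalyticSet A)
    {t : ℝ} (ht : 0 < t) (hdim : ENNReal.ofReal t < dimH A) :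
    ∃ K ⊆ A, IsCompact K ∧ ∃ ν : ProbabilityMeasure (ι → ℝ), (ν : Measure (ι → ℝ)) Kᶜ = 0 ∧
      rieszEnergy t (ν : Measure (ι → ℝ)) < ∞ := by
  obtain ⟨s, hts, hsA⟩ := ENNReal.lt_iff_exists_nnreal_btwn.1 hdim
  rw [ENNReal.ofReal_lt_coe_iff ht.le] at hts
  have capacity_ne_zero : l2Capacity gridCube (gridWeight t) A ≠ 0 := fun hzero =>
    ENNReal.zero_ne_top ((hausdorffMeasure_eq_zero_of_l2Capacity_gridCube_eq_zero ht.le hts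
      hzero).symm.trans (hausdorffMeasure_of_lt_dimH hsA))
  obtain ⟨K, hKA, hK, ν, hνK, hν⟩ :=
    exists_probabilityMeasure_tsum_sq_lt_top (fun _ => isOpen_ball) hA capacity_ne_zero
  refine ⟨K, hKA, hK, ν, hνK, (rieszEnergy_le_tsum_gridCube ht (ν : Measure (ι → ℝ))).trans_lt ?_⟩
  exact ENNReal.add_lt_top.2 ⟨ENNReal.one_lt_top,
    ENNReal.mul_lt_top (ENNReal.rpow_lt_top_of_nonneg ht.le (by simp)) hν⟩

theorem exists_probabilityMeasure_rieszEnergy_lt_top {E : Type*} [NormedAddCommGroup E]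
    [NormedSpace ℝ E] [FiniteDimensional ℝ E] [MeasurableSpace E] [BorelSpace E] {A : Set E}
    (hA : AnalyticSet A) {t : ℝ} (ht : 0 < t) (hdim : ENNReal.ofReal t < dimH A) :
    ∃ K ⊆ A, IsCompact K ∧ ∃ ν : ProbabilityMeasure E, (ν : Measure E) Kᶜ = 0 ∧
      rieszEnergy t (ν : Measure E) < ∞ := by
  let φ : E ≃L[ℝ] (Fin (Module.finrank ℝ E) → ℝ) := ContinuousLinearEquiv.ofFinrankEq (by simp)
  obtain ⟨K, hKA, hK, ν, hνK, hν⟩ := exists_probabilityMeasure_rieszEnergy_lt_top_pi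
    (hA.image_of_continuous φ.continuous) ht (by rwa [φ.dimH_image])
  refine ⟨φ.symm '' K, ?_, hK.image φ.symm.continuous,
    ν.map φ.symm.continuous.aemeasurable, ?_, ?_⟩
  · rintro _ ⟨y, hy, rfl⟩
    obtain ⟨x, hx, rfl⟩ := hKA hy
    simpa using hx
  · rw [ProbabilityMeasure.toMeasure_map, Measure.map_apply φ.symm.continuous.measurable
      (hK.image φ.symm.continuous).measurableSet.compl, preimage_compl,
      preimage_image_eq _ φ.symm.injective, hνK]
  · refine (rieszEnergy_map_le φ.symm.continuous.measurable (K := ‖φ.toContinuousLinearMap‖₊ + 1)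
      ?_ (by positivity) ht.le).trans_lt (ENNReal.mul_lt_top ?_ hν)
    · exact fun x y => (φ.symm.antilipschitz x y).trans
        (mul_le_mul_left (ENNReal.coe_le_coe.2 le_self_add) _)
    · exact ENNReal.rpow_lt_top_of_nonneg ht.le ENNReal.coe_ne_top

end Frostman

section Shear

variable {E F : Type*} [NormedAddCommGroup E] [NormedSpace ℝ E] [NormedAddCommGroup F]
  [NormedSpace ℝ F]

/-- The projection of `E ≃ F × ℝ` onto `F` along the direction `(θ, 1)`. -/
def shear (φ : E ≃L[ℝ] F × ℝ) (θ : F) (x : E) : F := (φ x).1 - (φ x).2 • θ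

/-- The closed tube of radius `r` around the line `{u | shear φ θ u = z}`, for `p = (z, θ)`. Pairs
`(z, θ)` parametrise the lines of `E` that are transversal to `F × {0}`. -/
def tube (φ : E ≃L[ℝ] F × ℝ) (r : ℝ) (p : F × F) : Set E := {u | shear φ p.2 u ∈ closedBall p.1 r}

variable {φ : E ≃L[ℝ] F × ℝ}

lemma shear_sub (θ : F) (x y : E) : shear φ θ (x - y) = shear φ θ x - shear φ θ y := by
  simp only [shear, map_sub, Prod.fst_sub, Prod.snd_sub, sub_smul]
  abel

@[fun_prop]
lemma continuous_shear : Continuous fun q : F × E => shear φ q.1 q.2 := by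
  unfold shear
  fun_prop

lemma isClosed_setOf_mem_tube (r : ℝ) : IsClosed {q : (F × F) × E | q.2 ∈ tube φ r q.1} := by
  refine isClosed_le (f := fun q : (F × F) × E => dist (shear φ q.1.2 q.2) q.1.1) ?_
    continuous_const
  exact (continuous_shear.comp (by fun_prop : Continuous fun q : (F × F) × E => (q.1.2, q.2))).dist
    (by fun_prop)

lemma isClosed_setOf_mem_tube_and_mem_tube (r : ℝ) (u v : E) :
    IsClosed {p | u ∈ tube φ r p ∧ v ∈ tube φ r p} :=
  ((isClosed_setOf_mem_tube r).preimage (Continuous.prodMk_left u)).inter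
    ((isClosed_setOf_mem_tube r).preimage (Continuous.prodMk_left v))

lemma isClosed_tube (r : ℝ) (p : F × F) : IsClosed (tube φ r p) :=
  (isClosed_setOf_mem_tube r).preimage (Continuous.prodMk_right p)

lemma tube_mono (p : F × F) : Monotone fun r => tube φ r p :=
  fun _ _ h _ hu => closedBall_subset_closedBall h hu

lemma norm_shear_sub_le_of_mem_tube {r : ℝ} {p : F × F} {u v : E} (hu : u ∈ tube φ r p)
    (hv : v ∈ tube φ r p) : ‖shear φ p.2 (u - v)‖ ≤ 2 * r := by
  rw [shear_sub, ← dist_eq_norm, two_mul]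
  exact (dist_triangle_right _ _ p.1).trans (add_le_add hu hv)

lemma setOf_norm_shear_le_eq_closedBall {w : E} (hw : (φ w).2 ≠ 0) (δ : ℝ) :
    {θ | ‖shear φ θ w‖ ≤ δ} = closedBall ((φ w).2⁻¹ • (φ w).1) (|(φ w).2|⁻¹ * δ) := by
  ext θ
  rw [mem_closedBall, dist_eq_norm, ← div_eq_inv_mul, le_div_iff₀' (abs_pos.2 hw),
    ← Real.norm_eq_abs, ← norm_smul, smul_sub, smul_inv_smul₀ hw, norm_sub_rev]
  rfl

variable (φ) in
lemma exists_norm_le_mul_max_of_norm_shear_le (R : ℝ) :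
    ∃ M : ℝ≥0, M ≠ 0 ∧ ∀ θ ∈ closedBall (0 : F) R, ∀ (w : E) (δ : ℝ), ‖shear φ θ w‖ ≤ δ →
      ‖w‖ ≤ M * max δ |(φ w).2| := by
  obtain ⟨D, hD⟩ : ∃ D : ℝ≥0, ∀ w, ‖w‖ ≤ D * ‖φ w‖ :=
    ⟨‖φ.symm.toContinuousLinearMap‖₊, fun w => by
      simpa using φ.symm.toContinuousLinearMap.le_opNorm (φ w)⟩
  refine ⟨(D + 1) * (R.toNNReal + 1), by positivity, fun θ hθ w δ hδ => ?_⟩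
  have hR : ‖θ‖ ≤ R := mem_closedBall_zero_iff.1 hθ
  have max_nonneg : 0 ≤ max δ |(φ w).2| := (abs_nonneg _).trans (le_max_right _ _)
  have norm_fst_le : ‖(φ w).1‖ ≤ (R + 1) * max δ |(φ w).2| := by
    calc ‖(φ w).1‖ = ‖shear φ θ w + (φ w).2 • θ‖ := by rw [shear, sub_add_cancel]
      _ ≤ δ + |(φ w).2| * R := (norm_add_le _ _).trans (add_le_add hδ (by
          rw [norm_smul, Real.norm_eq_abs]
          gcongr))
      _ ≤ (R + 1) * max δ |(φ w).2| := by
          nlinarith [le_max_left δ |(φ w).2|, le_max_right δ |(φ w).2|, (norm_nonneg θ).trans hR]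
  have norm_snd_le : ‖(φ w).2‖ ≤ (R + 1) * max δ |(φ w).2| :=
    (le_max_right _ _).trans (le_mul_of_one_le_left max_nonneg (by linarith [norm_nonneg θ]))
  push_cast
  rw [Real.coe_toNNReal R ((norm_nonneg θ).trans hR), mul_assoc]
  calc ‖w‖ ≤ D * ‖φ w‖ := hD w
    _ ≤ (D + 1) * ((R + 1) * max δ |(φ w).2|) :=
        mul_le_mul (by simp) (max_le norm_fst_le norm_snd_le) (norm_nonneg _) (by positivity)

variable [MeasurableSpace E] [BorelSpace E]

lemma rieszEnergy_restrict_tube (a r : ℝ) (μ : Measure E) [SFinite μ] (p : F × F) :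
    rieszEnergy a (μ.restrict (tube φ r p)) =
      ∫⁻ q, {p | q.1 ∈ tube φ r p ∧ q.2 ∈ tube φ r p}.indicator
        (fun _ => edist q.1 q.2 ^ (-a)) p ∂μ.prod μ := by
  rw [rieszEnergy_restrict, ← lintegral_indicator
    ((isClosed_tube r p).measurableSet.prod (isClosed_tube r p).measurableSet)]
  rfl

variable [MeasurableSpace F] [BorelSpace F] [SecondCountableTopology F]
  [SecondCountableTopology E]

lemma measurable_indicator_setOf_mem_tube_and_mem_tube (a r : ℝ) :
    Measurable fun x : (F × F) × E × E =>
      {p | x.2.1 ∈ tube φ r p ∧ x.2.2 ∈ tube φ r p}.indicator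
        (fun _ => edist x.2.1 x.2.2 ^ (-a)) x.1 := by
  have isClosed_fst : IsClosed {x : (F × F) × E × E | x.2.1 ∈ tube φ r x.1} :=
    (isClosed_setOf_mem_tube r).preimage (f := fun x : (F × F) × E × E => (x.1, x.2.1))
      (by fun_prop)
  have isClosed_snd : IsClosed {x : (F × F) × E × E | x.2.2 ∈ tube φ r x.1} :=
    (isClosed_setOf_mem_tube r).preimage (f := fun x : (F × F) × E × E => (x.1, x.2.2))
      (by fun_prop)
  exact (by fun_prop : Measurable fun x : (F × F) × E × E => edist x.2.1 x.2.2 ^ (-a)).indicator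
    (isClosed_fst.inter isClosed_snd).measurableSet

lemma measurable_rieszEnergy_restrict_tube (a r : ℝ) (μ : Measure E) [SFinite μ] :
    Measurable fun p => rieszEnergy a (μ.restrict (tube φ r p)) := by
  simp_rw [rieszEnergy_restrict_tube]
  exact (measurable_indicator_setOf_mem_tube_and_mem_tube a r).lintegral_prod_right'

lemma measurable_measure_tube (μ : Measure E) [SFinite μ] (r : ℝ) :
    Measurable fun p => μ (tube φ r p) :=
  measurable_measure_prodMk_left (isClosed_setOf_mem_tube r).measurableSet

end Shear

section TubeEnergy

variable {E F : Type*} [NormedAddCommGroup E] [NormedSpace ℝ E] [NormedAddCommGroup F]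
  [NormedSpace ℝ F] [FiniteDimensional ℝ F] [MeasureSpace F] [BorelSpace F]
  [(volume : Measure F).IsAddHaarMeasure]

/-- The measure on the space of lines `(z, θ)` transversal to `F × {0}` whose slope `θ` has norm at
most `R`. -/
noncomputable def lineMeasure (F : Type*) [NormedAddCommGroup F] [MeasureSpace F] (R : ℝ) :
    Measure (F × F) :=
  volume.prod (volume.restrict (closedBall 0 R))

instance (R : ℝ) : SigmaFinite (lineMeasure F R) := by
  unfold lineMeasure
  infer_instance

instance (R : ℝ) : IsLocallyFiniteMeasure (lineMeasure F R) := by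
  unfold lineMeasure
  infer_instance

lemma volume_setOf_norm_shear_le (φ : E ≃L[ℝ] F × ℝ) (R : ℝ) {δ : ℝ} (hδ : 0 < δ) (w : E) :
    volume {θ ∈ closedBall (0 : F) R | ‖shear φ θ w‖ ≤ δ} ≤
      (1 + volume (closedBall (0 : F) R) / volume (closedBall (0 : F) 1)) *
        volume (closedBall (0 : F) ((max δ |(φ w).2|)⁻¹ * δ)) := by
  rcases max_cases δ |(φ w).2| with ⟨hmax, -⟩ | ⟨hmax, hδτ⟩
  · rw [hmax, inv_mul_cancel₀ hδ.ne', add_mul, ENNReal.div_mul_cancel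
      (measure_closedBall_pos _ _ one_pos).ne' measure_closedBall_lt_top.ne]
    exact (measure_mono (sep_subset _ _)).trans le_add_self
  · have hτ : (φ w).2 ≠ 0 := abs_pos.1 (hδ.trans hδτ)
    calc volume {θ ∈ closedBall (0 : F) R | ‖shear φ θ w‖ ≤ δ}
        ≤ volume {θ : F | ‖shear φ θ w‖ ≤ δ} := measure_mono fun _ hθ => hθ.2
      _ = volume (closedBall (0 : F) ((max δ |(φ w).2|)⁻¹ * δ)) := by
          rw [setOf_norm_shear_le_eq_closedBall hτ, hmax, Measure.addHaar_closedBall_center volume]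
      _ ≤ _ := le_mul_of_one_le_left zero_le le_self_add

lemma exists_volume_setOf_norm_shear_le (φ : E ≃L[ℝ] F × ℝ) (R : ℝ) :
    ∃ C : ℝ≥0∞, C ≠ ∞ ∧ ∀ δ : ℝ, 0 < δ → ∀ w : E,
      volume {θ ∈ closedBall (0 : F) R | ‖shear φ θ w‖ ≤ δ} ≤
        C * volume (closedBall (0 : F) δ) * ‖w‖ₑ ^ (-(Module.finrank ℝ F : ℝ)) := by
  obtain ⟨M, hM0, hM⟩ := exists_norm_le_mul_max_of_norm_shear_le φ R
  set d := Module.finrank ℝ F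
  set C₀ := 1 + volume (closedBall (0 : F) R) / volume (closedBall (0 : F) 1)
  refine ⟨C₀ * (M : ℝ≥0∞) ^ d, ENNReal.mul_ne_top ?_ (by finiteness), fun δ hδ w => ?_⟩
  · exact ENNReal.add_ne_top.2 ⟨ENNReal.one_ne_top, ENNReal.div_ne_top
      measure_closedBall_lt_top.ne (measure_closedBall_pos _ _ one_pos).ne'⟩
  rcases {θ ∈ closedBall (0 : F) R | ‖shear φ θ w‖ ≤ δ}.eq_empty_or_nonempty with h | ⟨θ, hθ, hθδ⟩
  · simp only [h, measure_empty, zero_le]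
  set ρ := max δ |(φ w).2|
  have hρ : 0 < ρ := hδ.trans_le (le_max_left _ _)
  have enorm_le : ‖w‖ₑ ≤ M * ENNReal.ofReal ρ := by
    rw [← ofReal_norm, ← ENNReal.ofReal_coe_nnreal, ← ENNReal.ofReal_mul M.coe_nonneg]
    exact ENNReal.ofReal_le_ofReal (hM θ hθ w δ hθδ)
  have ofReal_inv_le : ENNReal.ofReal ρ⁻¹ ≤ M * ‖w‖ₑ⁻¹ := by
    rw [ENNReal.ofReal_inv_of_pos hρ]
    exact inv_le_mul_inv_of_le_mul (ENNReal.coe_ne_zero.2 hM0) ENNReal.coe_ne_top enorm_le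
  calc volume {θ ∈ closedBall (0 : F) R | ‖shear φ θ w‖ ≤ δ}
      ≤ C₀ * volume (closedBall (0 : F) (ρ⁻¹ * δ)) := volume_setOf_norm_shear_le φ R hδ w
    _ = C₀ * (ENNReal.ofReal ρ⁻¹ ^ d * volume (closedBall (0 : F) δ)) := by
        rw [Measure.addHaar_closedBall_mul volume _ (inv_nonneg.2 hρ.le) hδ.le,
          ENNReal.ofReal_pow (inv_nonneg.2 hρ.le)]
    _ ≤ C₀ * ((M * ‖w‖ₑ⁻¹) ^ d * volume (closedBall (0 : F) δ)) := by gcongr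
    _ = C₀ * (M : ℝ≥0∞) ^ d * volume (closedBall (0 : F) δ) * ‖w‖ₑ ^ (-(d : ℝ)) := by
        rw [mul_pow, ENNReal.rpow_neg, ENNReal.rpow_natCast, ENNReal.inv_pow]
        ring

lemma lineMeasure_setOf_mem_tube_and_mem_tube_le (φ : E ≃L[ℝ] F × ℝ) (R r : ℝ) (u v : E) :
    lineMeasure F R {p | u ∈ tube φ r p ∧ v ∈ tube φ r p} ≤ volume (closedBall (0 : F) r) *
      volume {θ ∈ closedBall (0 : F) R | ‖shear φ θ (u - v)‖ ≤ 2 * r} := by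
  set near := {θ : F | ‖shear φ θ (u - v)‖ ≤ 2 * r}
  have measurableSet_near : MeasurableSet near :=
    (isClosed_le (continuous_shear.comp (Continuous.prodMk_left _)).norm
      continuous_const).measurableSet
  rw [lineMeasure, Measure.prod_apply_symm
    (isClosed_setOf_mem_tube_and_mem_tube r u v).measurableSet]
  calc ∫⁻ θ in closedBall 0 R, volume {z | u ∈ tube φ r (z, θ) ∧ v ∈ tube φ r (z, θ)}
      ≤ ∫⁻ θ in closedBall 0 R, near.indicator (fun _ => volume (closedBall (0 : F) r)) θ := by
        refine lintegral_mono fun θ => ?_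
        by_cases hθ : θ ∈ near
        · rw [indicator_of_mem hθ, ← Measure.addHaar_closedBall_center volume (shear φ θ u)]
          exact measure_mono fun z hz => mem_closedBall_comm.1 hz.1
        · rw [indicator_of_notMem hθ, nonpos_iff_eq_zero]
          refine measure_mono_null (fun z hz => hθ ?_) measure_empty
          exact norm_shear_sub_le_of_mem_tube (p := (z, θ)) hz.1 hz.2
    _ = volume (closedBall (0 : F) r) * volume {θ ∈ closedBall (0 : F) R | θ ∈ near} := by
        rw [lintegral_indicator_const measurableSet_near,
          Measure.restrict_apply measurableSet_near, inter_comm]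
        rfl

lemma exists_lineMeasure_setOf_mem_tube_and_mem_tube_le (φ : E ≃L[ℝ] F × ℝ) (R : ℝ) :
    ∃ C : ℝ≥0∞, C ≠ ∞ ∧ ∀ r : ℝ, 0 < r → ∀ u v : E,
      lineMeasure F R {p | u ∈ tube φ r p ∧ v ∈ tube φ r p} ≤
        volume (closedBall (0 : F) r) ^ 2 *
          (C * edist u v ^ (-(Module.finrank ℝ F : ℝ))) := by
  obtain ⟨C, hC, hCle⟩ := exists_volume_setOf_norm_shear_le φ R
  refine ⟨C * ENNReal.ofReal (2 ^ Module.finrank ℝ F), by finiteness, fun r hr u v => ?_⟩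
  calc lineMeasure F R {p | u ∈ tube φ r p ∧ v ∈ tube φ r p}
      ≤ volume (closedBall (0 : F) r) * (C * volume (closedBall (0 : F) (2 * r)) *
          ‖u - v‖ₑ ^ (-(Module.finrank ℝ F : ℝ))) :=
        (lineMeasure_setOf_mem_tube_and_mem_tube_le φ R r u v).trans <| by
          gcongr
          exact hCle _ (by positivity) _
    _ = _ := by
        rw [Measure.addHaar_closedBall_mul volume _ zero_le_two hr.le, edist_eq_enorm_sub]
        ring

lemma exists_lintegral_rieszEnergy_restrict_tube_le [MeasurableSpace E] [BorelSpace E]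
    [SecondCountableTopology E] (φ : E ≃L[ℝ] F × ℝ) (R : ℝ) :
    ∃ C : ℝ≥0∞, C ≠ ∞ ∧ ∀ r a : ℝ, 0 < r → 0 ≤ a → ∀ (μ : Measure E) [SFinite μ],
      ∫⁻ p, rieszEnergy a (μ.restrict (tube φ r p)) ∂lineMeasure F R ≤
        volume (closedBall (0 : F) r) ^ 2 * (C * rieszEnergy (a + Module.finrank ℝ F) μ) := by
  obtain ⟨C, hC, hCle⟩ := exists_lineMeasure_setOf_mem_tube_and_mem_tube_le φ R
  refine ⟨C, hC, fun r a hr ha μ _ => ?_⟩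
  set d := (Module.finrank ℝ F : ℝ)
  set common : E × E → Set (F × F) := fun q => {p | q.1 ∈ tube φ r p ∧ q.2 ∈ tube φ r p}
  have edist_rpow_mul (q : E × E) :
      edist q.1 q.2 ^ (-a) * edist q.1 q.2 ^ (-d) = edist q.1 q.2 ^ (-(a + d)) := by
    rw [ENNReal.rpow_neg, ENNReal.rpow_neg, ENNReal.rpow_neg, ← ENNReal.inv_rpow,
      ← ENNReal.inv_rpow, ← ENNReal.inv_rpow, ENNReal.rpow_add_of_nonneg _ _ ha (by positivity)]
  calc ∫⁻ p, rieszEnergy a (μ.restrict (tube φ r p)) ∂lineMeasure F R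
      = ∫⁻ q, ∫⁻ p, (common q).indicator (fun _ => edist q.1 q.2 ^ (-a)) p ∂lineMeasure F R
          ∂μ.prod μ := by
        simp_rw [rieszEnergy_restrict_tube]
        exact lintegral_lintegral_swap
          (measurable_indicator_setOf_mem_tube_and_mem_tube a r).aemeasurable
    _ = ∫⁻ q, edist q.1 q.2 ^ (-a) * lineMeasure F R (common q) ∂μ.prod μ :=
        lintegral_congr fun q => lintegral_indicator_const
          (isClosed_setOf_mem_tube_and_mem_tube r q.1 q.2).measurableSet _
    _ ≤ ∫⁻ q, volume (closedBall (0 : F) r) ^ 2 * (C * edist q.1 q.2 ^ (-(a + d))) ∂μ.prod μ := by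
        refine lintegral_mono fun q => (mul_le_mul_right (hCle r hr q.1 q.2) _).trans_eq ?_
        rw [← edist_rpow_mul]
        ring
    _ = volume (closedBall (0 : F) r) ^ 2 * (C * rieszEnergy (a + d) μ) := by
        rw [lintegral_const_mul _ (by fun_prop), lintegral_const_mul _ (by fun_prop), rieszEnergy]

end TubeEnergy

section LineThrough

variable {E F : Type*} [NormedAddCommGroup E] [NormedSpace ℝ E] [NormedAddCommGroup F]
  [NormedSpace ℝ F]

/-- The line through `x` in direction `(θ, 1)`, for `q = (x, θ)`, in the coordinates `(z, θ)`
of `tube`. -/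
def lineThrough (φ : E ≃L[ℝ] F × ℝ) (q : E × F) : F × F := (shear φ q.2 q.1, q.2)

variable {φ : E ≃L[ℝ] F × ℝ}

lemma continuous_lineThrough : Continuous (lineThrough φ) :=
  (continuous_shear.comp continuous_swap).prodMk continuous_snd

lemma mem_tube_lineThrough {r : ℝ} {x u : E} {θ : F} :
    u ∈ tube φ r (lineThrough φ (x, θ)) ↔ ‖shear φ θ (u - x)‖ ≤ r := by
  rw [shear_sub, ← dist_eq_norm]
  rfl

lemma eventually_setOf_norm_shear_le_subset_closedBall {R : ℝ} {w : E}
    (hw : ‖(φ w).1‖ < R * |(φ w).2|) :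
    ∀ᶠ δ in 𝓝 (0 : ℝ), {θ | ‖shear φ θ w‖ ≤ δ} ⊆ closedBall 0 R := by
  have hτ : (φ w).2 ≠ 0 := fun h => by simp [h, (norm_nonneg _).not_gt] at hw
  have norm_center_lt : ‖(φ w).2⁻¹ • (φ w).1‖ < R := by
    rwa [norm_smul, norm_inv, Real.norm_eq_abs, inv_mul_lt_iff₀ (abs_pos.2 hτ), mul_comm]
  have radius_tendsto : Tendsto (fun δ => |(φ w).2|⁻¹ * δ) (𝓝 0) (𝓝 0) := by
    simpa using (tendsto_id (α := ℝ) (x := 𝓝 0)).const_mul |(φ w).2|⁻¹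
  filter_upwards [radius_tendsto.eventually (gt_mem_nhds (sub_pos.2 norm_center_lt))] with δ hδ
  rw [setOf_norm_shear_le_eq_closedBall hτ]
  exact closedBall_subset_closedBall' (by rw [dist_zero_right]; linarith)

lemma setLIntegral_closedBall_shear [MeasureSpace F] [BorelSpace F] (r : ℝ) (ψ : F × F → ℝ≥0∞)
    (q : E × F) :
    ∫⁻ z in closedBall (shear φ q.2 q.1) r, ψ (z, q.2) =
      ∫⁻ z, {p | q.1 ∈ tube φ r p}.indicator ψ (z, q.2) := by
  have closedBall_eq : closedBall (shear φ q.2 q.1) r = {z | q.1 ∈ tube φ r (z, q.2)} :=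
    ext fun _ => mem_closedBall_comm
  rw [← lintegral_indicator measurableSet_closedBall, closedBall_eq]
  rfl

lemma measurable_indicator_setOf_mem_tube [MeasurableSpace E] [BorelSpace E] [MeasurableSpace F]
    [BorelSpace F] [SecondCountableTopology F] (r : ℝ) {ψ : F × F → ℝ≥0∞} (hψ : Measurable ψ) :
    Measurable fun x : (F × F) × E => {p | x.2 ∈ tube φ r p}.indicator ψ x.1 :=
  (hψ.comp measurable_fst).indicator (isClosed_setOf_mem_tube r).measurableSet

lemma measurable_setLIntegral_closedBall_shear [MeasurableSpace E] [BorelSpace E]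
    [MeasureSpace F] [BorelSpace F] [SecondCountableTopology F] [SFinite (volume : Measure F)]
    (r : ℝ) {ψ : F × F → ℝ≥0∞} (hψ : Measurable ψ) :
    Measurable fun q : E × F => ∫⁻ z in closedBall (shear φ q.2 q.1) r, ψ (z, q.2) := by
  have measurable_swap : Measurable fun y : (E × F) × F => ((y.2, y.1.2), y.1.1) := by fun_prop
  simp_rw [setLIntegral_closedBall_shear]
  exact ((measurable_indicator_setOf_mem_tube (φ := φ) r hψ).comp
    measurable_swap).lintegral_prod_right'

end LineThrough

section VolumeClosedBall

variable {F : Type*} [NormedAddCommGroup F] [NormedSpace ℝ F] [FiniteDimensional ℝ F]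
  [MeasureSpace F] [BorelSpace F] [(volume : Measure F).IsAddHaarMeasure]

lemma volume_closedBall_inv_mul_cancel {r : ℝ} (hr : 0 < r) (y : F) (c : ℝ≥0∞) :
    (volume (closedBall (0 : F) r))⁻¹ * (volume (closedBall y r) * c) = c := by
  rw [Measure.addHaar_closedBall_center volume y, ← mul_assoc, ENNReal.inv_mul_cancel
    (measure_closedBall_pos _ _ hr).ne' measure_closedBall_lt_top.ne, one_mul]

lemma le_liminf_setLIntegral_closedBall {ψ : F → ℝ≥0∞} (hψ : LowerSemicontinuous ψ) {r : ℕ → ℝ}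
    (hr : ∀ k, 0 < r k) (hr0 : Tendsto r atTop (𝓝 0)) (y : F) :
    ψ y ≤ liminf (fun k => (volume (closedBall (0 : F) (r k)))⁻¹ *
      ∫⁻ z in closedBall y (r k), ψ z) atTop := by
  refine le_of_forall_lt_imp_le_of_dense fun b hb => ?_
  obtain ⟨ε, hε, lt_on_ball⟩ := Metric.eventually_nhds_iff.1 (hψ y b hb)
  refine le_liminf_of_le (by isBoundedDefault) ?_
  filter_upwards [hr0.eventually (gt_mem_nhds hε)] with k hk
  calc b = (volume (closedBall (0 : F) (r k)))⁻¹ * ∫⁻ _ in closedBall y (r k), b := by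
        rw [setLIntegral_const, mul_comm b, volume_closedBall_inv_mul_cancel (hr k)]
    _ ≤ (volume (closedBall (0 : F) (r k)))⁻¹ * ∫⁻ z in closedBall y (r k), ψ z := by
        gcongr 1
        exact setLIntegral_mono' measurableSet_closedBall fun z hz =>
          (lt_on_ball ((mem_closedBall.1 hz).trans_lt hk)).le

lemma liminf_volume_setOf_norm_shear_le_pos {E : Type*} [NormedAddCommGroup E] [NormedSpace ℝ E]
    {φ : E ≃L[ℝ] F × ℝ} {R : ℝ} {w : E} (hw : ‖(φ w).1‖ < R * |(φ w).2|)
    {r : ℕ → ℝ} (hr : ∀ k, 0 < r k) (hr0 : Tendsto r atTop (𝓝 0)) :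
    0 < liminf (fun k => (volume (closedBall (0 : F) (r k)))⁻¹ *
      volume {θ ∈ closedBall (0 : F) R | ‖shear φ θ w‖ ≤ r k}) atTop := by
  have hτ : (φ w).2 ≠ 0 := fun h => by simp [h, (norm_nonneg _).not_gt] at hw
  have hτ_inv : 0 < |(φ w).2|⁻¹ := inv_pos.2 (abs_pos.2 hτ)
  refine lt_of_lt_of_le (b := ENNReal.ofReal (|(φ w).2|⁻¹ ^ Module.finrank ℝ F))
    (ENNReal.ofReal_pos.2 (pow_pos hτ_inv _)) (le_liminf_of_le (by isBoundedDefault) ?_)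
  filter_upwards [hr0.eventually (eventually_setOf_norm_shear_le_subset_closedBall hw)] with k hk
  rw [show {θ ∈ closedBall (0 : F) R | ‖shear φ θ w‖ ≤ r k} = {θ | ‖shear φ θ w‖ ≤ r k} from
      inter_eq_right.2 hk, setOf_norm_shear_le_eq_closedBall hτ,
    Measure.addHaar_closedBall_center volume, Measure.addHaar_closedBall_mul volume _ hτ_inv.le
      (hr k).le, mul_comm (ENNReal.ofReal _), volume_closedBall_inv_mul_cancel (hr k)]

end VolumeClosedBall

section LinesThrough

variable {E F : Type*} [NormedAddCommGroup E] [NormedSpace ℝ E] [MeasurableSpace E]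
  [NormedAddCommGroup F] [NormedSpace ℝ F] [MeasureSpace F]

/-- The measure on the space of lines, in the coordinates `(z, θ)` of `tube`, obtained by drawing
through `ν`-almost every point the lines whose slope `θ` has norm at most `R`. -/
noncomputable def linesThrough (φ : E ≃L[ℝ] F × ℝ) (R : ℝ) (ν : Measure E) : Measure (F × F) :=
  (ν.prod (volume.restrict (closedBall 0 R))).map (lineThrough φ)

variable [FiniteDimensional ℝ F] [BorelSpace F] {φ : E ≃L[ℝ] F × ℝ}

lemma lintegral_linesThrough [BorelSpace E] (R : ℝ) (ν : Measure E) {ψ : F × F → ℝ≥0∞}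
    (hψ : Measurable ψ) : ∫⁻ p, ψ p ∂linesThrough φ R ν =
      ∫⁻ q, ψ (lineThrough φ q) ∂ν.prod (volume.restrict (closedBall 0 R)) :=
  lintegral_map hψ continuous_lineThrough.measurable

variable [(volume : Measure F).IsAddHaarMeasure]

instance (R : ℝ) (ν : Measure E) [IsFiniteMeasure ν] : IsFiniteMeasure (linesThrough φ R ν) := by
  have : IsFiniteMeasure (volume.restrict (closedBall (0 : F) R)) :=
    isFiniteMeasure_restrict.2 measure_closedBall_lt_top.ne
  unfold linesThrough
  infer_instance

variable [BorelSpace E]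

lemma lintegral_prod_setLIntegral_closedBall (R r : ℝ) (ν : Measure E) [SFinite ν]
    {ψ : F × F → ℝ≥0∞} (hψ : Measurable ψ) :
    ∫⁻ q, ∫⁻ z in closedBall (shear φ q.2 q.1) r, ψ (z, q.2)
        ∂(volume : Measure F) ∂ν.prod (volume.restrict (closedBall 0 R)) =
      ∫⁻ p, ν (tube φ r p) * ψ p ∂lineMeasure F R := by
  have measurable_incidence := measurable_indicator_setOf_mem_tube (φ := φ) r hψ
  calc ∫⁻ q, ∫⁻ z in closedBall (shear φ q.2 q.1) r, ψ (z, q.2)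
        ∂(volume : Measure F) ∂ν.prod (volume.restrict (closedBall 0 R))
      = ∫⁻ x, ∫⁻ p, {p | x ∈ tube φ r p}.indicator ψ p ∂lineMeasure F R ∂ν := by
        rw [lintegral_prod _ (measurable_setLIntegral_closedBall_shear r hψ).aemeasurable]
        exact lintegral_congr fun x =>
          (lintegral_congr fun θ => setLIntegral_closedBall_shear r ψ (x, θ)).trans
            (lintegral_prod_symm' ({p | x ∈ tube φ r p}.indicator ψ)
              (measurable_incidence.comp measurable_prodMk_right)).symm
    _ = ∫⁻ p, ∫⁻ x, {p | x ∈ tube φ r p}.indicator ψ p ∂ν ∂lineMeasure F R :=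
        (lintegral_lintegral_swap measurable_incidence.aemeasurable).symm
    _ = ∫⁻ p, ν (tube φ r p) * ψ p ∂lineMeasure F R := by
        refine lintegral_congr fun p => ?_
        rw [mul_comm]
        exact lintegral_indicator_const (isClosed_tube r p).measurableSet (ψ p)

variable [SecondCountableTopology E]

lemma lintegral_measure_tube_linesThrough (R r : ℝ) (μ ν : Measure E) [SFinite μ] [SFinite ν] :
    ∫⁻ p, μ (tube φ r p) ∂linesThrough φ R ν =
      ∫⁻ q, volume {θ ∈ closedBall (0 : F) R | ‖shear φ θ (q.2 - q.1)‖ ≤ r} ∂ν.prod μ := by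
  have isClosed_near : IsClosed {y : F × E × E | ‖shear φ y.1 (y.2.2 - y.2.1)‖ ≤ r} :=
    isClosed_le (continuous_shear.comp (by fun_prop :
      Continuous fun y : F × E × E => (y.1, y.2.2 - y.2.1))).norm continuous_const
  have isClosed_slopes (q : E × E) : IsClosed {θ : F | ‖shear φ θ (q.2 - q.1)‖ ≤ r} :=
    isClosed_near.preimage (Continuous.prodMk_left q)
  calc ∫⁻ p, μ (tube φ r p) ∂linesThrough φ R ν
      = ∫⁻ θ in closedBall 0 R, (ν.prod μ) {q | ‖shear φ θ (q.2 - q.1)‖ ≤ r} := by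
        rw [lintegral_linesThrough R ν (measurable_measure_tube μ r), lintegral_prod_symm'
          (fun q => μ (tube φ r (lineThrough φ q)))
          ((measurable_measure_tube μ r).comp continuous_lineThrough.measurable)]
        refine lintegral_congr fun θ => ?_
        exact (lintegral_congr fun x => congrArg μ (ext fun u => mem_tube_lineThrough)).trans
          (Measure.prod_apply (isClosed_near.preimage
            (Continuous.prodMk_right θ)).measurableSet).symm
    _ = ((volume.restrict (closedBall 0 R)).prod (ν.prod μ))
          {y : F × E × E | ‖shear φ y.1 (y.2.2 - y.2.1)‖ ≤ r} :=
        (Measure.prod_apply isClosed_near.measurableSet).symm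
    _ = ∫⁻ q, volume {θ ∈ closedBall (0 : F) R | ‖shear φ θ (q.2 - q.1)‖ ≤ r} ∂ν.prod μ := by
        rw [Measure.prod_apply_symm isClosed_near.measurableSet]
        refine lintegral_congr fun q => ?_
        exact (Measure.restrict_apply (isClosed_slopes q).measurableSet).trans
          (congrArg volume (inter_comm _ _))

lemma lintegral_linesThrough_le_liminf (R : ℝ) (ν : Measure E) [SFinite ν] {r : ℕ → ℝ}
    (hr : ∀ k, 0 < r k) (hr0 : Tendsto r atTop (𝓝 0)) {ψ : F × F → ℝ≥0∞}
    (hψ : LowerSemicontinuous ψ) :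
    ∫⁻ p, ψ p ∂linesThrough φ R ν ≤ liminf (fun k =>
      ∫⁻ p, (volume (closedBall (0 : F) (r k)))⁻¹ * ν (tube φ (r k) p) * ψ p
        ∂lineMeasure F R) atTop := by
  have measurable_ball (k : ℕ) := measurable_setLIntegral_closedBall_shear (φ := φ) (r k)
    hψ.measurable
  calc ∫⁻ p, ψ p ∂linesThrough φ R ν
      = ∫⁻ q, ψ (lineThrough φ q) ∂ν.prod (volume.restrict (closedBall 0 R)) :=
        lintegral_linesThrough R ν hψ.measurable
    _ ≤ ∫⁻ q, liminf (fun k => (volume (closedBall (0 : F) (r k)))⁻¹ *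
          ∫⁻ z in closedBall (shear φ q.2 q.1) (r k), ψ (z, q.2) ∂(volume : Measure F)) atTop
            ∂ν.prod (volume.restrict (closedBall 0 R)) :=
        lintegral_mono fun q => le_liminf_setLIntegral_closedBall (ψ := fun z => ψ (z, q.2))
          (hψ.comp (Continuous.prodMk_left q.2)) hr hr0 _
    _ ≤ liminf (fun k => ∫⁻ q, (volume (closedBall (0 : F) (r k)))⁻¹ *
          ∫⁻ z in closedBall (shear φ q.2 q.1) (r k), ψ (z, q.2) ∂(volume : Measure F)
            ∂ν.prod (volume.restrict (closedBall 0 R))) atTop :=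
        lintegral_liminf_le fun k => (measurable_ball k).const_mul _
    _ = liminf (fun k => ∫⁻ p, (volume (closedBall (0 : F) (r k)))⁻¹ * ν (tube φ (r k) p) * ψ p
          ∂lineMeasure F R) atTop := by
        congr with k
        rw [lintegral_const_mul _ (measurable_ball k),
          lintegral_prod_setLIntegral_closedBall R (r k) ν hψ.measurable]
        simp_rw [mul_assoc]
        exact (lintegral_const_mul _ ((measurable_measure_tube ν (r k)).mul hψ.measurable)).symm

lemma liminf_lintegral_measure_tube_linesThrough_pos {R : ℝ} {μ ν : Measure E} [SFinite μ]
    [SFinite ν] (hcone : (ν.prod μ) {q | ‖(φ (q.2 - q.1)).1‖ < R * |(φ (q.2 - q.1)).2|} ≠ 0)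
    {r : ℕ → ℝ} (hr : ∀ k, 0 < r k) (hr0 : Tendsto r atTop (𝓝 0)) :
    0 < liminf (fun k => ∫⁻ p, (volume (closedBall (0 : F) (r k)))⁻¹ * μ (tube φ (r k) p)
      ∂linesThrough φ R ν) atTop := by
  set slopes : ℕ → E × E → ℝ≥0∞ := fun k q => (volume (closedBall (0 : F) (r k)))⁻¹ *
    volume {θ ∈ closedBall (0 : F) R | ‖shear φ θ (q.2 - q.1)‖ ≤ r k}
  have measurable_volume_slopes (k : ℕ) : Measurable fun q : E × E =>
      volume {θ ∈ closedBall (0 : F) R | ‖shear φ θ (q.2 - q.1)‖ ≤ r k} :=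
    measurable_measure_prodMk_left (((isClosed_closedBall.preimage continuous_snd).inter
      (isClosed_le (continuous_shear.comp (by fun_prop :
        Continuous fun y : (E × E) × F => (y.2, y.1.2 - y.1.1))).norm
          continuous_const)).measurableSet)
  have measurable_slopes (k : ℕ) : Measurable (slopes k) :=
    (measurable_volume_slopes k).const_mul _
  have lintegral_eq (k : ℕ) : ∫⁻ p, (volume (closedBall (0 : F) (r k)))⁻¹ * μ (tube φ (r k) p)
      ∂linesThrough φ R ν = ∫⁻ q, slopes k q ∂ν.prod μ := by
    rw [lintegral_const_mul _ (measurable_measure_tube μ (r k)),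
      lintegral_measure_tube_linesThrough, lintegral_const_mul _ (measurable_volume_slopes k)]
  simp_rw [lintegral_eq]
  refine lt_of_lt_of_le ?_ (lintegral_liminf_le measurable_slopes)
  refine pos_iff_ne_zero.2 fun h => hcone ?_
  have ae_eq_zero := (lintegral_eq_zero_iff (.liminf measurable_slopes)).1 h
  exact measure_mono_null (fun q hq => (liminf_volume_setOf_norm_shear_le_pos hq hr hr0).ne')
    ae_eq_zero

end LinesThrough

section ThinLines

lemma rieszEnergy_zero {X : Type*} [PseudoEMetricSpace X] [MeasurableSpace X] (μ : Measure X)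
    [SFinite μ] : rieszEnergy 0 μ = μ univ ^ 2 := by
  simp only [rieszEnergy, neg_zero, ENNReal.rpow_zero, lintegral_one, ← univ_prod_univ,
    Measure.prod_prod, sq]

lemma sq_measure_le_energyRatio_mul_rieszEnergy {X : Type*} [MetricSpace X]
    [SecondCountableTopology X] [MeasurableSpace X] [BorelSpace X] {μ : Measure X} [SFinite μ]
    {a : ℝ} (ha : 0 ≤ a) {T : Set X} (hT : rieszEnergy a (μ.restrict T) ≠ ∞) :
    μ T ^ 2 ≤ energyRatio a μ T * rieszEnergy a (μ.restrict T) := by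
  rcases eq_or_ne (rieszEnergy a (μ.restrict T)) 0 with h0 | h0
  · rw [rieszEnergy, lintegral_eq_zero_iff (by fun_prop)] at h0
    have rpow_ne_zero (q : X × X) : edist q.1 q.2 ^ (-a) ≠ 0 := by
      rw [ENNReal.rpow_neg, ENNReal.inv_ne_zero]
      exact ENNReal.rpow_ne_top_of_nonneg ha (edist_ne_top _ _)
    have measure_univ_eq : (μ.restrict T).prod (μ.restrict T) univ = 0 :=
      measure_mono_null (fun q _ => rpow_ne_zero q) h0
    rw [← univ_prod_univ, Measure.prod_prod, Measure.restrict_apply_univ, ← sq] at measure_univ_eq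
    exact measure_univ_eq.trans_le zero_le
  · rw [energyRatio, ENNReal.div_mul_cancel h0 hT]

variable {E F : Type*} [NormedAddCommGroup E] [NormedSpace ℝ E] [MeasurableSpace E] [BorelSpace E]
  [NormedAddCommGroup F] [NormedSpace ℝ F]

/-- The lines, in the coordinates `(z, θ)` of `tube`, which `μ` hardly charges at dimension `a`:
the capacity of the traces of `μ` on tubes shrinking to the line, as measured by `energyRatio`,
tends to `0`. -/
def thinLines (φ : E ≃L[ℝ] F × ℝ) (a : ℝ) (μ : Measure E) : Set (F × F) :=
  {p | Tendsto (fun k : ℕ => energyRatio a μ (tube φ (1 / (k + 1)) p)) atTop (𝓝 0)}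

variable {φ : E ≃L[ℝ] F × ℝ} {a : ℝ} {μ : Measure E}

lemma mem_thinLines_of_hausdorffMeasure_eq_zero [SFinite μ] (ha : 0 < a) {K : Set E}
    (hK : IsCompact K) (hμK : μ Kᶜ = 0) {p : F × F}
    (hnull : μH[a] (K ∩ {u | shear φ p.2 u = p.1}) = 0) : p ∈ thinLines φ a μ := by
  have iInter_tube : ⋂ k : ℕ, tube φ (1 / (k + 1)) p ⊆ {u | shear φ p.2 u = p.1} := fun u hu =>
    dist_le_zero.1 (ge_of_tendsto' tendsto_one_div_add_atTop_nhds_zero_nat (mem_iInter.1 hu))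
  exact tendsto_energyRatio_zero ha hK hμK (fun k => isClosed_tube _ p)
    (fun _ _ hkl => tube_mono p (Nat.one_div_le_one_div hkl))
    (measure_mono_null (inter_subset_inter_right _ iInter_tube) hnull)

variable [SecondCountableTopology E] [MeasurableSpace F] [BorelSpace F]
  [SecondCountableTopology F]

lemma measurable_energyRatio_tube [SFinite μ] (r : ℝ) :
    Measurable fun p => energyRatio a μ (tube φ r p) :=
  ((measurable_measure_tube μ r).pow_const 2).div (measurable_rieszEnergy_restrict_tube a r μ)

lemma measurableSet_thinLines [SFinite μ] : MeasurableSet (thinLines φ a μ) :=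
  measurableSet_tendsto _ fun _ => measurable_energyRatio_tube _

end ThinLines

section Transversal

variable {E F : Type*} [NormedAddCommGroup E] [NormedSpace ℝ E] [MeasurableSpace E] [BorelSpace E]
  [SecondCountableTopology E] [NormedAddCommGroup F] [NormedSpace ℝ F] [FiniteDimensional ℝ F]
  [MeasureSpace F] [BorelSpace F] [(volume : Measure F).IsAddHaarMeasure]
  {φ : E ≃L[ℝ] F × ℝ} {μ ν : Measure E}

variable (φ) in
lemma exists_lintegral_inv_sq_mul_rieszEnergy_restrict_tube_le (R : ℝ) {a : ℝ} (ha : 0 ≤ a)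
    [SFinite μ] (hμ : rieszEnergy (a + Module.finrank ℝ F) μ ≠ ∞) :
    ∃ C : ℝ≥0∞, C ≠ ∞ ∧ ∀ r : ℝ, 0 < r →
      ∫⁻ p, (volume (closedBall (0 : F) r))⁻¹ ^ 2 * rieszEnergy a (μ.restrict (tube φ r p))
        ∂lineMeasure F R ≤ C := by
  obtain ⟨C, hC, lintegral_le⟩ := exists_lintegral_rieszEnergy_restrict_tube_le φ R
  refine ⟨C * rieszEnergy (a + Module.finrank ℝ F) μ, ENNReal.mul_ne_top hC hμ, fun r hr => ?_⟩
  rw [lintegral_const_mul _ (measurable_rieszEnergy_restrict_tube a r μ)]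
  refine (mul_le_mul_right (lintegral_le r a hr ha μ) _).trans_eq ?_
  rw [← mul_assoc, ← mul_pow, ENNReal.inv_mul_cancel (measure_closedBall_pos _ _ hr).ne'
    measure_closedBall_lt_top.ne, one_pow, one_mul]

lemma exists_linesThrough_eq_withDensity (R : ℝ) [IsFiniteMeasure ν]
    (hν : rieszEnergy (Module.finrank ℝ F) ν ≠ ∞) :
    ∃ d : F × F → ℝ≥0∞, Measurable d ∧ linesThrough φ R ν = (lineMeasure F R).withDensity d ∧
      ∫⁻ p, d p ^ 2 ∂lineMeasure F R ≠ ∞ := by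
  obtain ⟨C, hC, lintegral_le⟩ := exists_lintegral_inv_sq_mul_rieszEnergy_restrict_tube_le φ R
    le_rfl (μ := ν) (by rwa [zero_add])
  set r : ℕ → ℝ := fun k => 1 / (k + 1)
  have r_pos (k : ℕ) : 0 < r k := Nat.one_div_pos_of_nat
  obtain ⟨d, hd, eq_withDensity, lintegral_sq_le⟩ := exists_withDensity_of_le_liminf
    (κ := lineMeasure F R) (ν := linesThrough φ R ν)
    (g := fun k p => (volume (closedBall (0 : F) (r k)))⁻¹ * ν (tube φ (r k) p))
    (fun k => (measurable_measure_tube ν (r k)).const_mul _) hC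
    (fun k => by
      simpa only [mul_pow, rieszEnergy_zero, Measure.restrict_apply_univ] using
        lintegral_le (r k) (r_pos k))
    (fun ψ hψ => lintegral_linesThrough_le_liminf R ν r_pos
      tendsto_one_div_add_atTop_nhds_zero_nat hψ)
  exact ⟨d, hd, eq_withDensity, (lintegral_sq_le.trans_lt hC.lt_top).ne⟩

variable {R a : ℝ}

lemma tendsto_lintegral_measure_tube_linesThrough_zero [IsFiniteMeasure μ] [IsFiniteMeasure ν]
    (ha : 0 < a) {K : Set E} (hK : IsCompact K) (hμK : μ Kᶜ = 0)
    (hμ : rieszEnergy (a + Module.finrank ℝ F) μ ≠ ∞)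
    (hν : rieszEnergy (Module.finrank ℝ F) ν ≠ ∞)
    (hthin : ∀ᵐ p ∂linesThrough φ R ν, p ∈ thinLines φ a μ) :
    Tendsto (fun k : ℕ => ∫⁻ p, (volume (closedBall (0 : F) (1 / (k + 1))))⁻¹ *
      μ (tube φ (1 / (k + 1)) p) ∂linesThrough φ R ν) atTop (𝓝 0) := by
  obtain ⟨d, hd, eq_withDensity, lintegral_sq_ne_top⟩ :=
    exists_linesThrough_eq_withDensity (φ := φ) R hν
  obtain ⟨C, hC, lintegral_energy_le⟩ :=
    exists_lintegral_inv_sq_mul_rieszEnergy_restrict_tube_le φ R ha.le hμ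
  set r : ℕ → ℝ := fun k => 1 / (k + 1)
  have r_pos (k : ℕ) : 0 < r k := Nat.one_div_pos_of_nat
  have volume_inv_ne_zero (k : ℕ) : (volume (closedBall (0 : F) (r k)))⁻¹ ≠ 0 :=
    ENNReal.inv_ne_zero.2 measure_closedBall_lt_top.ne
  have measurable_energy (k : ℕ) : Measurable fun p => (volume (closedBall (0 : F) (r k)))⁻¹ ^ 2 *
      rieszEnergy a (μ.restrict (tube φ (r k) p)) :=
    (measurable_rieszEnergy_restrict_tube a (r k) μ).const_mul _
  rw [eq_withDensity, ae_withDensity_iff hd] at hthin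
  simp_rw [eq_withDensity, lintegral_withDensity_eq_lintegral_mul _ hd
    ((measurable_measure_tube μ _).const_mul _), mul_comm d]
  refine tendsto_lintegral_mul_zero_of_sq_le_mul hC (M := ediam K ^ a + 1)
    (ENNReal.add_ne_top.2 ⟨ENNReal.rpow_ne_top_of_nonneg ha.le hK.isBounded.ediam_ne_top,
      ENNReal.one_ne_top⟩) measurable_energy (fun k => measurable_energyRatio_tube (r k)) hd
    lintegral_sq_ne_top (fun k => lintegral_energy_le _ (r_pos k))
    (fun k p => energyRatio_le_ediam_rpow_add_one ha.le hK.measurableSet hμK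
      (isClosed_tube (r k) p).measurableSet) (fun k => ?_) hthin
  filter_upwards [ae_lt_top (measurable_energy k)
    ((lintegral_energy_le _ (r_pos k)).trans_lt hC.lt_top).ne] with p hp
  rw [mul_pow, mul_left_comm]
  exact mul_le_mul_right (sq_measure_le_energyRatio_mul_rieszEnergy ha.le
    (ENNReal.lt_top_of_mul_ne_top_right hp.ne (pow_ne_zero 2 (volume_inv_ne_zero k))).ne) _

theorem not_ae_lineThrough_mem_thinLines [IsFiniteMeasure μ] [IsFiniteMeasure ν] (ha : 0 < a)
    {K : Set E} (hK : IsCompact K) (hμK : μ Kᶜ = 0)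
    (hμ : rieszEnergy (a + Module.finrank ℝ F) μ ≠ ∞)
    (hν : rieszEnergy (Module.finrank ℝ F) ν ≠ ∞)
    (hcone : (ν.prod μ) {q | ‖(φ (q.2 - q.1)).1‖ < R * |(φ (q.2 - q.1)).2|} ≠ 0) :
    ¬ ∀ᵐ q ∂ν.prod (volume.restrict (closedBall (0 : F) R)), lineThrough φ q ∈ thinLines φ a μ := by
  intro hthin
  have ae_mem_thinLines : ∀ᵐ p ∂linesThrough φ R ν, p ∈ thinLines φ a μ :=
    (ae_map_iff continuous_lineThrough.aemeasurable measurableSet_thinLines).2 hthin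
  have liminf_pos := liminf_lintegral_measure_tube_linesThrough_pos hcone
    (fun _ => Nat.one_div_pos_of_nat) tendsto_one_div_add_atTop_nhds_zero_nat
  rw [(tendsto_lintegral_measure_tube_linesThrough_zero ha hK hμK hμ hν
    ae_mem_thinLines).liminf_eq] at liminf_pos
  exact liminf_pos.false

end Transversal

section Directions

lemma hausdorffMeasure_image_eq_zero_of_locallyLipschitzOn {X Y : Type*} [EMetricSpace X]
    [SecondCountableTopology X] [MeasurableSpace X] [BorelSpace X] [EMetricSpace Y]
    [MeasurableSpace Y] [BorelSpace Y] {f : X → Y} {s : Set X} (hf : LocallyLipschitzOn s f)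
    {d : ℝ} (hd : 0 ≤ d) (hs : μH[d] s = 0) : μH[d] (f '' s) = 0 := by
  have exists_lipschitzOnWith : ∀ x ∈ s, ∃ C : ℝ≥0, ∃ t ∈ 𝓝[s] x, LipschitzOnWith C f t :=
    fun x hx => hf hx
  choose! C t ht hlip using exists_lipschitzOnWith
  obtain ⟨c, hcs, hc, hcover⟩ := TopologicalSpace.countable_cover_nhdsWithin ht
  refine measure_mono_null ?_ ((measure_biUnion_null_iff hc).2 fun x hx => ?_ :
    μH[d] (⋃ x ∈ c, f '' (s ∩ t x)) = 0)
  · rintro _ ⟨x, hx, rfl⟩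
    obtain ⟨y, hy, hxy⟩ := mem_iUnion₂.1 (hcover hx)
    exact mem_iUnion₂.2 ⟨y, hy, x, ⟨hx, hxy⟩, rfl⟩
  · refine le_antisymm ?_ zero_le
    calc μH[d] (f '' (s ∩ t x)) ≤ C x ^ d * μH[d] (s ∩ t x) :=
          ((hlip x (hcs hx)).mono inter_subset_right).hausdorffMeasure_image_le hd
      _ = 0 := by rw [measure_mono_null inter_subset_left hs, mul_zero]

variable {E F : Type*} [NormedAddCommGroup E] [NormedSpace ℝ E] [NormedAddCommGroup F]
  [NormedSpace ℝ F] {φ : E ≃L[ℝ] F × ℝ}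

lemma setOf_shear_eq_subset (x : E) (θ : F) {c : ℝ} (hc : c ≠ 0) :
    {u | shear φ θ u = shear φ θ x} ⊆ {y | ∃ r : ℝ, y = x + r • c • φ.symm (θ, 1)} := fun u hu => by
  have shear_eq_zero : shear φ θ (u - x) = 0 := by rw [shear_sub, sub_eq_zero.2 hu]
  refine ⟨(φ (u - x)).2 * c⁻¹, ?_⟩
  rw [← sub_eq_iff_eq_add', smul_smul, inv_mul_cancel_right₀ hc, ← map_smul,
    ContinuousLinearEquiv.eq_symm_apply, Prod.smul_mk, smul_eq_mul, mul_one,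
    ← sub_eq_zero.1 shear_eq_zero]

variable [MeasurableSpace E] [BorelSpace E] [SecondCountableTopology E] [FiniteDimensional ℝ F]
  [MeasureSpace F] [BorelSpace F] [(volume : Measure F).IsAddHaarMeasure]

lemma hausdorffMeasure_ne_zero_of_forall_exists_smul_mem {Θ : Set F} (hΘ : volume Θ ≠ 0) {S : Set E}
    (hS : ∀ θ ∈ Θ, ∃ c : ℝ, c ≠ 0 ∧ c • φ.symm (θ, 1) ∈ S) :
    μH[(Module.finrank ℝ F : ℝ)] S ≠ 0 := by
  intro hnull
  set slope : E → F := fun e => (φ e).2⁻¹ • (φ e).1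
  set S' := S ∩ {e | (φ e).2 ≠ 0}
  have locallyLipschitz : LocallyLipschitzOn S' slope := fun e he => by
    have contDiffAt : ContDiffAt ℝ 1 slope e :=
      ((contDiff_snd.comp φ.contDiff).contDiffAt.inv he.2).smul
        (contDiff_fst.comp φ.contDiff).contDiffAt
    obtain ⟨C, t, ht, hlip⟩ := contDiffAt.exists_lipschitzOnWith
    exact ⟨C, t, mem_nhdsWithin_of_mem_nhds ht, hlip⟩
  have subset_image : Θ ⊆ slope '' S' := fun θ hθ => by
    obtain ⟨c, hc, hcS⟩ := hS θ hθ
    exact ⟨_, ⟨hcS, by simpa using hc⟩, by simp [slope, smul_smul, hc]⟩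
  have hausdorffMeasure_eq_zero : μH[(Module.finrank ℝ F : ℝ)] Θ = 0 :=
    measure_mono_null subset_image (hausdorffMeasure_image_eq_zero_of_locallyLipschitzOn
      locallyLipschitz (Nat.cast_nonneg _) (measure_mono_null inter_subset_left hnull))
  exact hΘ (Measure.absolutelyContinuous_isAddHaarMeasure volume _ hausdorffMeasure_eq_zero)

lemma hausdorffMeasure_setOf_le_dimH_inter_line_ne_zero {a : ℝ} (ha : 0 < a) {μ : Measure E}
    [SFinite μ] {A K : Set E} (hKA : K ⊆ A) (hK : IsCompact K) (hμK : μ Kᶜ = 0) {x : E}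
    (hx : ¬ ∀ᵐ θ, lineThrough φ (x, θ) ∈ thinLines φ a μ) :
    μH[(Module.finrank ℝ F : ℝ)] {e : E | ‖e‖ = 1 ∧
      ENNReal.ofReal a ≤ dimH (A ∩ {y | ∃ r : ℝ, y = x + r • e})} ≠ 0 := by
  refine hausdorffMeasure_ne_zero_of_forall_exists_smul_mem (φ := φ) hx fun θ hθ => ?_
  have norm_ne_zero : ‖φ.symm (θ, 1)‖ ≠ 0 := by simp
  refine ⟨‖φ.symm (θ, 1)‖⁻¹, inv_ne_zero norm_ne_zero, ?_, ?_⟩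
  · rw [norm_smul, norm_inv, norm_norm, inv_mul_cancel₀ norm_ne_zero]
  have hausdorffMeasure_ne_zero : μH[a] (K ∩ {u | shear φ θ u = shear φ θ x}) ≠ 0 :=
    fun hnull => hθ (mem_thinLines_of_hausdorffMeasure_eq_zero ha hK hμK hnull)
  rw [← Real.coe_toNNReal a ha.le] at hausdorffMeasure_ne_zero
  exact (le_dimH_of_hausdorffMeasure_ne_zero hausdorffMeasure_ne_zero).trans
    (dimH_mono (inter_subset_inter hKA (setOf_shear_eq_subset x θ (inv_ne_zero norm_ne_zero))))

end Directions

section ThinPoints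

variable {E F : Type*} [NormedAddCommGroup E] [NormedSpace ℝ E] [MeasurableSpace E] [BorelSpace E]
  [NormedAddCommGroup F] [NormedSpace ℝ F]

/-- The points through which almost every line, in the chart `φ`, is thin for `μ`. It is the
exceptional set of the theorem. -/
def thinPoints [MeasureSpace F] (φ : E ≃L[ℝ] F × ℝ) (a : ℝ) (μ : Measure E) : Set E :=
  {x | ∀ᵐ θ, lineThrough φ (x, θ) ∈ thinLines φ a μ}

variable [FiniteDimensional ℝ F] {φ : E ≃L[ℝ] F × ℝ}

lemma hausdorffMeasure_setOf_snd_eq_zero {t : ℝ} (ht : Module.finrank ℝ F < t) (c : ℝ) :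
    μH[t] {u | (φ u).2 = c} = 0 := by
  have subset_range : {u | (φ u).2 = c} ⊆ range fun z : F => φ.symm (z, c) := fun u hu =>
    ⟨(φ u).1, φ.symm_apply_eq.2 (Prod.ext rfl hu.symm)⟩
  have dimH_le : dimH {u | (φ u).2 = c} ≤ Module.finrank ℝ F :=
    (dimH_mono subset_range).trans
      (φ.symm.contDiff.comp (contDiff_id.prodMk contDiff_const)).dimH_range_le
  lift t to ℝ≥0 using (Nat.cast_nonneg _).trans ht.le
  exact hausdorffMeasure_of_dimH_lt (dimH_le.trans_lt (by exact_mod_cast ht))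

variable [SecondCountableTopology E] {μ ν : Measure E} {a : ℝ}

lemma exists_prod_setOf_norm_fst_lt_mul_abs_snd_ne_zero [SFinite μ] {t : ℝ}
    (ht : Module.finrank ℝ F < t) (hμ : rieszEnergy t μ ≠ ∞) (hμ0 : μ ≠ 0) (hν0 : ν ≠ 0) :
    ∃ R : ℝ, (ν.prod μ) {q | ‖(φ (q.2 - q.1)).1‖ < R * |(φ (q.2 - q.1)).2|} ≠ 0 := by
  by_contra! hcone
  have null_of_snd_ne_zero : (ν.prod μ) {q | (φ (q.2 - q.1)).2 ≠ 0} = 0 := by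
    refine measure_mono_null (fun q hq => ?_) (measure_iUnion_null fun k : ℕ => hcone k)
    obtain ⟨k, hk⟩ := exists_nat_gt (‖(φ (q.2 - q.1)).1‖ / |(φ (q.2 - q.1)).2|)
    exact mem_iUnion.2 ⟨k, (div_lt_iff₀ (abs_pos.2 hq)).1 hk⟩
  have null_of_snd_eq_zero : (ν.prod μ) {q | (φ (q.2 - q.1)).2 = 0} = 0 := by
    have isClosed_setOf : IsClosed {q : E × E | (φ (q.2 - q.1)).2 = 0} :=
      isClosed_eq (by fun_prop) continuous_const
    refine (Measure.measure_prod_null isClosed_setOf.measurableSet).2 (ae_of_all _ fun x => ?_)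
    refine measure_mono_null (fun y hy => ?_) (measure_eq_zero_of_hausdorffMeasure_eq_zero
      ((Nat.cast_nonneg _).trans_lt ht) hμ
      (hausdorffMeasure_setOf_snd_eq_zero (φ := φ) ht (φ x).2))
    simpa [sub_eq_zero] using hy
  have prod_univ_eq_zero : (ν.prod μ) (univ ×ˢ univ) = 0 :=
    measure_mono_null (fun q _ => (eq_or_ne (φ (q.2 - q.1)).2 0))
      (measure_union_null null_of_snd_eq_zero null_of_snd_ne_zero)
  rw [Measure.prod_prod, mul_eq_zero, Measure.measure_univ_eq_zero,
    Measure.measure_univ_eq_zero] at prod_univ_eq_zero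
  exact prod_univ_eq_zero.elim hν0 hμ0

variable [MeasureSpace F] [BorelSpace F] [(volume : Measure F).IsAddHaarMeasure]

lemma measurableSet_thinPoints [SFinite μ] : MeasurableSet (thinPoints φ a μ) :=
  measurable_measure_prodMk_left
    (continuous_lineThrough.measurable measurableSet_thinLines).compl (measurableSet_singleton 0)

-- A set of dimension greater than `finrank ℝ F` carries a measure of finite
-- `finrank ℝ F`-energy, to which the transversality theorem applies.
lemma dimH_thinPoints_le [FiniteDimensional ℝ E] [IsFiniteMeasure μ] (hF : 0 < Module.finrank ℝ F)
    (ha : 0 < a) {K : Set E} (hK : IsCompact K) (hμK : μ Kᶜ = 0) (hμ0 : μ ≠ 0)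
    (hμ : rieszEnergy (a + Module.finrank ℝ F) μ ≠ ∞) :
    dimH (thinPoints φ a μ) ≤ Module.finrank ℝ F := by
  by_contra! hdim
  obtain ⟨L, hL, -, ν, hνL, hν⟩ := exists_probabilityMeasure_rieszEnergy_lt_top
    measurableSet_thinPoints.analyticSet (Nat.cast_pos.2 hF) (by rwa [ENNReal.ofReal_natCast])
  obtain ⟨R, hR⟩ := exists_prod_setOf_norm_fst_lt_mul_abs_snd_ne_zero (φ := φ)
    (lt_add_of_pos_left _ ha) hμ hμ0 (IsProbabilityMeasure.ne_zero (ν : Measure E))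
  refine not_ae_lineThrough_mem_thinLines ha hK hμK hμ hν.ne hR
    ((Measure.ae_prod_iff_ae_ae (continuous_lineThrough.measurable measurableSet_thinLines)).2 ?_)
  filter_upwards [mem_ae_iff.2 hνL] with x hx using ae_restrict_of_ae (hL hx)

end ThinPoints

theorem stmt_16_general {E : Type*} [NormedAddCommGroup E] [NormedSpace ℝ E]
    [FiniteDimensional ℝ E] [MeasurableSpace E] [BorelSpace E] (hE : 2 ≤ Module.finrank ℝ E)
    {s : ℝ} (hs : (Module.finrank ℝ E : ℝ) - 1 < s) {A : Set E} (hA : AnalyticSet A)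
    (hdA : ENNReal.ofReal s < dimH A) :
    ∃ B : Set E, MeasurableSet B ∧ dimH B ≤ (Module.finrank ℝ E : ℝ≥0∞) - 1 ∧
      ∀ x ∉ B, 0 < μH[(Module.finrank ℝ E : ℝ) - 1] {e : E | ‖e‖ = 1 ∧
        ENNReal.ofReal (s - ((Module.finrank ℝ E : ℝ) - 1)) ≤
          dimH (A ∩ {y | ∃ r : ℝ, y = x + r • e})} := by
  obtain ⟨d, hd⟩ : ∃ d, Module.finrank ℝ E = d + 1 := ⟨_, (Nat.sub_add_cancel (by omega)).symm⟩
  have d_pos : 0 < d := by omega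
  let φ : E ≃L[ℝ] (Fin d → ℝ) × ℝ := ContinuousLinearEquiv.ofFinrankEq (by simp [hd])
  simp only [hd, Nat.cast_add, Nat.cast_one, add_sub_cancel_right,
    ENNReal.add_sub_cancel_right ENNReal.one_ne_top] at hs ⊢
  obtain ⟨K, hKA, hK, μ, hμK, hμ⟩ := exists_probabilityMeasure_rieszEnergy_lt_top hA
    ((Nat.cast_nonneg d).trans_lt hs) hdA
  have finrank_eq : Module.finrank ℝ (Fin d → ℝ) = d := Module.finrank_fin_fun ℝ
  refine ⟨thinPoints φ (s - d) μ, measurableSet_thinPoints, ?_, fun x hx => pos_iff_ne_zero.2 ?_⟩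
  · simpa only [finrank_eq] using dimH_thinPoints_le (φ := φ) (by rwa [finrank_eq])
      (sub_pos.2 hs) hK hμK (IsProbabilityMeasure.ne_zero (μ : Measure E))
      (by simpa only [finrank_eq, sub_add_cancel] using hμ.ne)
  · simpa only [finrank_eq] using
      hausdorffMeasure_setOf_le_dimH_inter_line_ne_zero (sub_pos.2 hs) hKA hK hμK hx

theorem stmt_16 (n : ℕ) (hn : 2 ≤ n) (s : ℝ) (hs1 : (n : ℝ) - 1 < s)
    (A : Set (EuclideanSpace ℝ (Fin n))) (hA : MeasurableSet A)
    (hdA : ENNReal.ofReal s < dimH A) :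
    ∃ B : Set (EuclideanSpace ℝ (Fin n)), MeasurableSet B ∧
      dimH B ≤ (n : ℝ≥0∞) - 1 ∧
      ∀ x ∉ B, 0 < μH[(n : ℝ) - 1]
        {e : EuclideanSpace ℝ (Fin n) | ‖e‖ = 1 ∧
          ENNReal.ofReal (s - ((n : ℝ) - 1)) ≤
            dimH (A ∩ {y | ∃ r : ℝ, y = x + r • e})} := by
  simpa only [finrank_euclideanSpace_fin] using
    stmt_16_general (E := EuclideanSpace ℝ (Fin n)) (by rwa [finrank_euclideanSpace_fin])
      (by rwa [finrank_euclideanSpace_fin]) hA.analyticSet hdA
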